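/- arXiv:1703.04715 — 3 statements merged into one kernel-verified Lean document; each statement's English description precedes it below -/
import Mathlib

section
/- For every integer k ≥ 2 and every non-negative integer n, the number of partitions of n in which each part is either even but not congruent to 2 modulo 4k, or odd and congruent to 1 or 2k+1 modulo 4k, equals the number of partitions of n in which, whenever an odd part 2j+1 appears, no other part equals any of 2j+1, 2j+2, ..., 2j+2k−1. -/
/-!
Both classes are in sum-preserving bijection with the partitions whose odd parts are distinct and
congruent to `1` modulo `2 * k`, with no condition on the even parts.

* Splitting every part `2 * c` with `c ≡ 1 [MOD 2 * k]` into `c + c` removes the parts congruent to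
  `2` modulo `4 * k` and frees the multiplicities of the parts congruent to `1` modulo `2 * k`.
  Conversely, equal pairs of such `c` are merged.
* A part `2 * i` is laid out as a column adding `2` to the rows `0, …, i - 1`, and a part
  `2 * k * i + 1` as a column adding `2 * k` to these rows and `1` to row `i`. The resulting rows
  decrease; row `i` is odd exactly when `2 * k * i + 1` is a part, and it is then at least
  `2 * k - 1` below the row above. These are the partitions of the second class, and the even parts
  are recovered from the differences of consecutive rows.
-/

namespace DualAndrews

open Finset Function

/-- The first class of partitions in the theorem, as a property of the multiset of parts. -/
def HasResidues (k : ℕ) (m : Multiset ℕ) : Prop :=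
  ∀ c ∈ m, (Even c ∧ c % (4 * k) ≠ 2) ∨ (Odd c ∧ (c % (4 * k) = 1 ∨ c % (4 * k) = 2 * k + 1))

/-- The second class of partitions in the theorem, as a property of the multiset of parts. -/
def HasOddGaps (k : ℕ) (m : Multiset ℕ) : Prop :=
  ∀ b ∈ m, Odd b → ∀ c : ℕ, b ≤ c → c + 2 ≤ b + 2 * k → m.count c ≤ if c = b then 1 else 0

/-- The class of partitions linking the two classes in the theorem. -/
def HasDistinctOddResidues (k : ℕ) (m : Multiset ℕ) : Prop :=
  ∀ c ∈ m, Odd c → c % (2 * k) = 1 ∧ m.count c ≤ 1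

theorem exists_multiset_count_eq {α : Type*} [DecidableEq α] {g : α → ℕ}
    (hg : g.support.Finite) : ∃ m : Multiset α, ∀ a, m.count a = g a :=
  ⟨(Finsupp.ofSupportFinite g hg).toMultiset, fun a ↦ by
    rw [Finsupp.count_toMultiset, Finsupp.ofSupportFinite_coe]⟩

theorem card_partition_eq_of_bijOn {P Q : Multiset ℕ → Prop} {φ : Multiset ℕ → Multiset ℕ}
    (hφ : Set.BijOn φ {m | 0 ∉ m ∧ P m} {m | 0 ∉ m ∧ Q m})
    (hsum : ∀ m, P m → (φ m).sum = m.sum) (n : ℕ) :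
    Nat.card {p : n.Partition // P p.parts} = Nat.card {p : n.Partition // Q p.parts} := by
  have zero_notMem (p : n.Partition) : 0 ∉ p.parts := fun h ↦ (p.parts_pos h).false
  let toPartition (p : {p : n.Partition // P p.parts}) : {p : n.Partition // Q p.parts} :=
    have hp := hφ.mapsTo ⟨zero_notMem p.1, p.2⟩
    ⟨⟨φ p.1.parts, fun hi ↦ Nat.pos_of_ne_zero fun h ↦ hp.1 (h ▸ hi),
      (hsum _ p.2).trans p.1.parts_sum⟩, hp.2⟩
  refine Nat.card_congr (Equiv.ofBijective toPartition ⟨fun p q h ↦ ?_, fun q ↦ ?_⟩)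
  · have hparts : φ p.1.parts = φ q.1.parts := congrArg (·.1.parts) h
    exact Subtype.ext <| Nat.Partition.ext <|
      hφ.injOn ⟨zero_notMem p.1, p.2⟩ ⟨zero_notMem q.1, q.2⟩ hparts
  · obtain ⟨m, ⟨h0, hP⟩, hm⟩ := hφ.surjOn ⟨zero_notMem q.1, q.2⟩
    have hn : m.sum = n := by rw [← hsum m hP, hm, q.1.parts_sum]
    exact ⟨⟨⟨m, fun hi ↦ Nat.pos_of_ne_zero fun h ↦ h0 (h ▸ hi), hn⟩, hP⟩,
      Subtype.ext (Nat.Partition.ext hm)⟩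

section Splitting

variable (d : ℕ) (S : ℕ → Prop)

/-- The numbers `d * b` with `S b`, which are the parts to be split into `d` copies of `b`. -/
abbrev IsSplittable (c : ℕ) : Prop := d ∣ c ∧ S (c / d)

variable {d S} in
theorem isSplittable_mul_iff (hd : 0 < d) {c : ℕ} : IsSplittable d S (d * c) ↔ S c := by
  simp [IsSplittable, Nat.mul_div_cancel_left c hd]

variable {d S} in
theorem not_isSplittable (hd : 0 < d) (hS : ∀ c, S c → ¬ S (d * c)) {c : ℕ} (hc : S c) :
    ¬ IsSplittable d S c := by
  rintro ⟨⟨b, rfl⟩, hb⟩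
  rw [Nat.mul_div_cancel_left b hd] at hb
  exact hS b hb hc

variable [DecidablePred S]

/-- The multiset in which every splittable part `c` of `m` is split into `d` copies of `c / d`. -/
def splitParts (m : Multiset ℕ) : Multiset ℕ :=
  m.bind fun c ↦ if IsSplittable d S c then Multiset.replicate d (c / d) else {c}

/-- The multiplicities of the multiset obtained from `m` by merging equal parts `c` with `S c`,
`d` at a time, into parts `d * c`. -/
def mergedCount (m : Multiset ℕ) (c : ℕ) : ℕ :=
  if IsSplittable d S c then m.count (c / d) / d
  else if S c then m.count c % d else m.count c

theorem sum_splitParts (m : Multiset ℕ) : (splitParts d S m).sum = m.sum := by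
  rw [splitParts, Multiset.sum_bind]
  conv_rhs => rw [← Multiset.map_id' m]
  congr! 3 with c
  split_ifs with h
  · rw [Multiset.sum_replicate, smul_eq_mul, Nat.mul_div_cancel' h.1]
  · exact Multiset.sum_singleton c

theorem finite_support_mergedCount (m : Multiset ℕ) : (mergedCount d S m).support.Finite := by
  refine (m.toFinset ∪ m.toFinset.image (d * ·)).finite_toSet.subset fun c hc ↦ ?_
  rw [mem_coe, mem_union, mem_image]
  contrapose! hc
  have hcm : m.count c = 0 := by simpa using hc.1
  rw [notMem_support, mergedCount, hcm]
  split_ifs with hsplit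
  · have hdiv : c / d ∉ m := fun hmem ↦
      hc.2 _ (Multiset.mem_toFinset.2 hmem) (Nat.mul_div_cancel' hsplit.1)
    rw [Multiset.count_eq_zero_of_notMem hdiv, Nat.zero_div]
  · exact Nat.zero_mod d
  · rfl

variable {d S}

theorem count_splitParts (hd : 0 < d) (m : Multiset ℕ) (c : ℕ) :
    (splitParts d S m).count c = (if IsSplittable d S c then 0 else m.count c) +
      d * (if S c then m.count (d * c) else 0) := by
  induction m using Multiset.induction_on with
  | empty => simp [splitParts]
  | cons b m ih =>
    have hcons : (splitParts d S (b ::ₘ m)).count c = (splitParts d S m).count c +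
        (if IsSplittable d S b then Multiset.replicate d (b / d) else {b}).count c := by
      rw [splitParts, Multiset.cons_bind, Multiset.count_add, add_comm, splitParts]
    rw [hcons, ih]
    simp only [Multiset.count_cons]
    by_cases hb : IsSplittable d S b
    · obtain ⟨a, rfl⟩ := hb.1
      have ha := (isSplittable_mul_iff hd).1 hb
      have hc : d * c = d * a ↔ a = c := by rw [Nat.mul_right_inj hd.ne', eq_comm]
      rw [if_pos hb, Nat.mul_div_cancel_left a hd, Multiset.count_replicate]
      split_ifs <;> grind
    · have hc : S c → d * c ≠ b := by
        rintro hc rfl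
        exact hb ((isSplittable_mul_iff hd).2 hc)
      rw [if_neg hb, Multiset.count_singleton]
      split_ifs <;> grind

variable (hd : 0 < d) (hS : ∀ c, S c → ¬ S (d * c))
include hd hS

theorem mergedCount_splitParts {m : Multiset ℕ} (hm : ∀ c ∈ m, S c → m.count c < d) (c : ℕ) :
    mergedCount d S (splitParts d S m) c = m.count c := by
  have count_split {b : ℕ} (hb : S b) :
      (splitParts d S m).count b = m.count b + d * m.count (d * b) := by
    rw [count_splitParts hd, if_neg (not_isSplittable hd hS hb), if_pos hb]
  have count_lt {b : ℕ} (hb : S b) : m.count b < d := by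
    by_cases hbm : b ∈ m
    · exact hm b hbm hb
    · rwa [Multiset.count_eq_zero_of_notMem hbm]
  rw [mergedCount]
  split_ifs with h₁ h₂
  · rw [count_split h₁.2, Nat.add_mul_div_left _ _ hd, Nat.div_eq_of_lt (count_lt h₁.2), zero_add,
      Nat.mul_div_cancel' h₁.1]
  · rw [count_split h₂, Nat.add_mul_mod_self_left, Nat.mod_eq_of_lt (count_lt h₂)]
  · rw [count_splitParts hd, if_neg h₁, if_neg h₂, mul_zero, add_zero]

theorem exists_splitParts_eq {m : Multiset ℕ} (hm : ∀ c ∈ m, ¬ IsSplittable d S c) :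
    ∃ P : Multiset ℕ, (∀ c, P.count c = mergedCount d S m c) ∧ splitParts d S P = m := by
  obtain ⟨P, hP⟩ := exists_multiset_count_eq (finite_support_mergedCount d S m)
  refine ⟨P, hP, Multiset.ext.2 fun c ↦ ?_⟩
  rw [count_splitParts hd, hP, hP]
  by_cases hc : S c
  · have hsplit : IsSplittable d S (d * c) := (isSplittable_mul_iff hd).2 hc
    have hc' := not_isSplittable hd hS hc
    rw [if_neg hc', if_pos hc, mergedCount, if_neg hc', if_pos hc, mergedCount, if_pos hsplit,
      Nat.mul_div_cancel_left c hd, Nat.mod_add_div]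
  · rw [if_neg hc, mul_zero, add_zero, mergedCount]
    split_ifs with hsplit
    · exact (Multiset.count_eq_zero_of_notMem fun hmem ↦ hm c hmem hsplit).symm
    · rfl

theorem bijOn_splitParts {U : ℕ → Prop} (hU : ∀ c, S c → (U c ↔ U (d * c))) :
    Set.BijOn (splitParts d S) {m | ∀ c ∈ m, U c ∧ (S c → m.count c < d)}
      {m | ∀ c ∈ m, U c ∧ ¬ IsSplittable d S c} := by
  refine ⟨fun m hm c hc ↦ ?_, fun m hm m' hm' h ↦ Multiset.ext.2 fun c ↦ ?_, fun m hm ↦ ?_⟩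
  · obtain ⟨b, hb, hcb⟩ := Multiset.mem_bind.1 hc
    split_ifs at hcb with hsplit
    · obtain rfl := Multiset.eq_of_mem_replicate hcb
      refine ⟨(hU _ hsplit.2).2 ?_, not_isSplittable hd hS hsplit.2⟩
      rw [Nat.mul_div_cancel' hsplit.1]
      exact (hm b hb).1
    · obtain rfl := Multiset.mem_singleton.1 hcb
      exact ⟨(hm c hb).1, hsplit⟩
  · rw [← mergedCount_splitParts hd hS (fun c hc ↦ (hm c hc).2), h,
      mergedCount_splitParts hd hS (fun c hc ↦ (hm' c hc).2)]
  · obtain ⟨P, hP, hPm⟩ := exists_splitParts_eq hd hS fun c hc ↦ (hm c hc).2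
    refine ⟨P, fun c hc ↦ ?_, hPm⟩
    rw [← Multiset.count_pos, hP, mergedCount] at hc
    rw [hP, mergedCount]
    split_ifs at hc ⊢ with hsplit hcS
    · have hmem : c / d ∈ m := Multiset.count_pos.1 (Nat.pos_of_div_pos hc)
      have hUc := (hU _ hsplit.2).1 (hm _ hmem).1
      rw [Nat.mul_div_cancel' hsplit.1] at hUc
      exact ⟨hUc, fun hcS ↦ absurd hsplit (not_isSplittable hd hS hcS)⟩
    · exact ⟨(hm c (Multiset.count_pos.1 (hc.trans_le (Nat.mod_le _ d)))).1,
        fun _ ↦ Nat.mod_lt _ hd⟩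
    · exact ⟨(hm c (Multiset.count_pos.1 hc)).1, fun h ↦ absurd h hcS⟩

end Splitting

section Residues

variable {k : ℕ}

theorem odd_of_mod_two_mul_eq_one {c : ℕ} (h : c % (2 * k) = 1) : Odd c := by
  rw [Nat.odd_iff, ← Nat.mod_mul_right_mod c 2 k, h]

theorem mod_two_mul_eq_one_iff (hk : 0 < k) {c : ℕ} :
    c % (2 * k) = 1 ↔ c % (4 * k) = 1 ∨ c % (4 * k) = 2 * k + 1 := by
  have hlt : c % (4 * k) < 4 * k := Nat.mod_lt _ (by omega)
  rw [← Nat.mod_mod_of_dvd c (show 2 * k ∣ 4 * k from ⟨2, by ring⟩)]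
  rcases lt_or_ge (c % (4 * k)) (2 * k) with h | h
  · rw [Nat.mod_eq_of_lt h]; omega
  · rw [Nat.mod_eq_sub_mod h, Nat.mod_eq_of_lt (by omega)]; omega

theorem isSplittable_two_iff {c : ℕ} : IsSplittable 2 (· % (2 * k) = 1) c ↔ c % (4 * k) = 2 := by
  have hmod (b : ℕ) : 2 * b % (4 * k) = 2 * (b % (2 * k)) := by
    rw [show 4 * k = 2 * (2 * k) by ring, Nat.mul_mod_mul_left]
  constructor
  · rintro ⟨⟨b, rfl⟩, hb⟩
    rw [Nat.mul_div_cancel_left b two_pos] at hb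
    rw [hmod, hb]
  · intro h
    obtain ⟨b, rfl⟩ : 2 ∣ c := by
      rw [Nat.dvd_iff_mod_eq_zero, ← Nat.mod_mod_of_dvd c (show 2 ∣ 4 * k from ⟨2 * k, by ring⟩), h]
    rw [hmod] at h
    exact (isSplittable_mul_iff two_pos).2 (by omega)

theorem bijOn_splitParts_hasResidues (hk : 0 < k) :
    Set.BijOn (splitParts 2 (· % (2 * k) = 1)) {m | 0 ∉ m ∧ HasDistinctOddResidues k m}
      {m | 0 ∉ m ∧ HasResidues k m} := by
  have not_mul {c : ℕ} : ¬ (2 * c) % (2 * k) = 1 := fun h ↦ by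
    have := Nat.odd_iff.1 (odd_of_mod_two_mul_eq_one h); omega
  have zero_notMem_and {P : ℕ → Prop} {m : Multiset ℕ} :
      (0 ∉ m ∧ ∀ c ∈ m, P c) ↔ ∀ c ∈ m, c ≠ 0 ∧ P c := by grind
  convert bijOn_splitParts (S := (· % (2 * k) = 1)) two_pos (fun c _ ↦ not_mul)
    (U := fun c ↦ c ≠ 0 ∧ (Odd c → c % (2 * k) = 1)) (fun c hc ↦ ?_) using 1
  · ext m
    refine zero_notMem_and.trans (forall₂_congr fun c _ ↦ ?_)
    have := odd_of_mod_two_mul_eq_one (k := k) (c := c)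
    grind
  · ext m
    refine zero_notMem_and.trans (forall₂_congr fun c _ ↦ ?_)
    have := odd_of_mod_two_mul_eq_one (k := k) (c := c)
    have heven (h : IsSplittable 2 (· % (2 * k) = 1) c) : Even c := even_iff_two_dvd.2 h.1
    rw [isSplittable_two_iff] at heven ⊢
    rw [← mod_two_mul_eq_one_iff hk]
    grind
  · have : c ≠ 0 := by rintro rfl; simp at hc
    simp [hc, this]

end Residues

section Rows

variable {α : Type*} [Zero α]

/-- The multiset of nonzero values of a finitely supported function. -/
def nonzeroValues (f : ℕ →₀ α) : Multiset α := f.support.val.map f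

theorem nonzeroValues_toFinsupp [DecidableEq α] {l : List α} (hl : 0 ∉ l) :
    nonzeroValues l.toFinsupp = l := by
  have hsupp : l.toFinsupp.support = range l.length := by
    rw [List.toFinsupp_support, filter_eq_self]
    intro i hi h
    rw [List.getD_eq_getElem _ _ (mem_range.1 hi)] at h
    exact hl (h ▸ List.getElem_mem _)
  have hmap : (List.range l.length).map (l.getD · 0) = l :=
    List.ext_getElem (by simp) fun i _ hi ↦ by simp [hi]
  rw [nonzeroValues, hsupp]
  exact congrArg _ hmap

variable {R : α → α → Prop} [IsTrans α R] [Std.Antisymm R]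

theorem exists_pairwise_toFinsupp_eq [DecidableEq α] (hR : ∀ a, R a 0) {f : ℕ →₀ α}
    (hf : ∀ i, R (f i) (f (i + 1))) :
    ∃ l : List α, 0 ∉ l ∧ l.Pairwise R ∧ l.toFinsupp = f := by
  have hlt {i j : ℕ} (hij : i < j) : R (f i) (f j) := Nat.rel_of_forall_rel_succ_of_lt R hf hij
  have hzero : ∃ i, f i = 0 := by
    obtain ⟨i, hi⟩ := Infinite.exists_notMem_finset f.support
    exact ⟨i, Finsupp.notMem_support_iff.1 hi⟩
  classical
  refine ⟨(List.range (Nat.find hzero)).map f, ?_, ?_, Finsupp.ext fun i ↦ ?_⟩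
  · simpa using fun i hi ↦ hi i le_rfl
  · exact List.pairwise_map.2 (List.pairwise_lt_range.imp hlt)
  · rcases lt_or_ge i (Nat.find hzero) with hi | hi
    · simp [hi]
    · have hfi : f i = 0 := by
        rcases hi.eq_or_lt with rfl | hi
        · exact Nat.find_spec hzero
        · exact antisymm (hR (f i)) (Nat.find_spec hzero ▸ hlt hi)
      rw [List.toFinsupp_apply_le _ _ (by simpa using hi), hfi]

theorem bijOn_nonzeroValues (hR : ∀ a, R a 0) :
    Set.BijOn nonzeroValues {f : ℕ →₀ α | ∀ i, R (f i) (f (i + 1))}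
      {m | 0 ∉ m ∧ m.Pairwise R} := by
  classical
  refine ⟨fun f hf ↦ ?_, fun f hf g hg h ↦ ?_, ?_⟩
  · obtain ⟨l, h0, hl, rfl⟩ := exists_pairwise_toFinsupp_eq hR hf
    rw [nonzeroValues_toFinsupp h0]
    exact ⟨h0, l, rfl, hl⟩
  · obtain ⟨l, hl0, hl, rfl⟩ := exists_pairwise_toFinsupp_eq hR hf
    obtain ⟨l', hl0', hl', rfl⟩ := exists_pairwise_toFinsupp_eq hR hg
    rw [nonzeroValues_toFinsupp hl0, nonzeroValues_toFinsupp hl0', Multiset.coe_eq_coe] at h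
    rw [h.eq_of_pairwise' hl hl']
  · rintro _ ⟨h0, l, rfl, hl⟩
    refine ⟨l.toFinsupp, fun i ↦ ?_, nonzeroValues_toFinsupp h0⟩
    rcases lt_or_ge (i + 1) l.length with hi | hi
    · rw [List.toFinsupp_apply_lt _ _ hi, List.toFinsupp_apply_lt _ _ (by omega)]
      exact List.pairwise_iff_getElem.1 hl i (i + 1) _ _ (Nat.lt_succ_self i)
    · rw [List.toFinsupp_apply_le _ _ hi]
      exact hR _

end Rows

section OddGap

/-- The relation between consecutive parts `a`, `b` of the partitions of the second class, listed
in decreasing order. The bound `a ≥ b + 2 * k - 1` below an odd part is written without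
subtraction. -/
def OddGap (k a b : ℕ) : Prop := b ≤ a ∧ (Odd b → b + 2 * k ≤ a + 1)

variable {k : ℕ}

instance : IsTrans ℕ (OddGap k) :=
  ⟨fun _ _ _ hab hbc ↦ ⟨hbc.1.trans hab.1, fun hc ↦ (hbc.2 hc).trans (Nat.succ_le_succ hab.1)⟩⟩

instance : Std.Antisymm (OddGap k) := ⟨fun _ _ hab hba ↦ hba.1.antisymm hab.1⟩

theorem oddGap_zero (a : ℕ) : OddGap k a 0 := ⟨a.zero_le, fun h ↦ by simp at h⟩

theorem hasOddGaps_cons {a : ℕ} {m : Multiset ℕ} (ha : ∀ b ∈ m, b ≤ a) :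
    HasOddGaps k (a ::ₘ m) ↔ (∀ b ∈ m, OddGap k a b) ∧ HasOddGaps k m := by
  refine ⟨fun h ↦ ⟨fun b hb ↦ ⟨ha b hb, fun hodd ↦ ?_⟩, fun b hb hodd c hbc hcb ↦ ?_⟩, ?_⟩
  · by_contra! hlt
    have hcount := h b (Multiset.mem_cons_of_mem hb) hodd a (ha b hb) (by omega)
    have := Multiset.count_pos.2 hb
    rw [Multiset.count_cons_self] at hcount
    grind
  · exact (Multiset.count_le_count_cons c a m).trans
      (h b (Multiset.mem_cons_of_mem hb) hodd c hbc hcb)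
  · rintro ⟨hgap, hm⟩ b hb hodd c hbc hcb
    by_cases hbm : b ∈ m
    · have := (hgap b hbm).2 hodd
      rw [Multiset.count_cons_of_ne (by omega)]
      exact hm b hbm hodd c hbc hcb
    · obtain rfl : b = a := (Multiset.mem_cons.1 hb).resolve_right hbm
      have hcm : c ∉ m := fun hc ↦ hbm ((ha c hc).antisymm hbc ▸ hc)
      rw [Multiset.count_cons, Multiset.count_eq_zero_of_notMem hcm, zero_add]

theorem hasOddGaps_coe_iff {l : List ℕ} (hl : l.Pairwise (· ≥ ·)) :
    HasOddGaps k l ↔ l.Pairwise (OddGap k) := by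
  induction l with
  | nil => simp [HasOddGaps]
  | cons a l ih =>
    obtain ⟨ha, hl⟩ := List.pairwise_cons.1 hl
    rw [List.pairwise_cons, ← ih hl, ← Multiset.cons_coe, hasOddGaps_cons (by simpa using ha)]
    rfl

theorem hasOddGaps_iff_pairwise {m : Multiset ℕ} :
    HasOddGaps k m ↔ m.Pairwise (OddGap k) := by
  refine ⟨fun h ↦ ?_, ?_⟩
  · have hcoe := Multiset.sort_eq m (· ≥ ·)
    rw [← hcoe, hasOddGaps_coe_iff (Multiset.pairwise_sort m _)] at h
    exact ⟨_, hcoe.symm, h⟩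
  · rintro ⟨l, rfl, hl⟩
    exact (hasOddGaps_coe_iff (hl.imp And.left)).2 hl

end OddGap

section Columns

variable (k : ℕ)

/-- The contribution of a part `c` to the rows: `2 * b` adds `2` to the rows `0, …, b - 1`, and
`2 * k * j + 1` adds `2 * k` to the rows `0, …, j - 1` and `1` to row `j`. On other odd numbers,
the remainder modulo `2 * k` replaces the final `1`. -/
noncomputable def column (c : ℕ) : ℕ →₀ ℕ :=
  if Even c then ∑ i ∈ range (c / 2), Finsupp.single i 2
  else ∑ i ∈ range (c / (2 * k)), Finsupp.single i (2 * k) +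
    Finsupp.single (c / (2 * k)) (c % (2 * k))

/-- The sequence of row sums of the diagram having a `column` for each part of `m`. -/
noncomputable def rows (m : Multiset ℕ) : ℕ →₀ ℕ := (m.map (column k)).sum

theorem degree_column (c : ℕ) : (column k c).degree = c := by
  rw [column]
  split_ifs with hc
  · rw [map_sum]
    simp [Nat.div_mul_cancel hc.two_dvd]
  · rw [map_add, map_sum]
    simp only [Finsupp.degree_single, sum_const, card_range, smul_eq_mul, Nat.div_add_mod']

theorem degree_rows (m : Multiset ℕ) : (rows k m).degree = m.sum := by
  rw [rows, map_multiset_sum, Multiset.map_map]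
  simp [degree_column]

theorem rows_cons (c : ℕ) (m : Multiset ℕ) : rows k (c ::ₘ m) = column k c + rows k m := by
  rw [rows, Multiset.map_cons, Multiset.sum_cons, rows]

theorem column_two_mul (b i : ℕ) : column k (2 * b) i = if i < b then 2 else 0 := by
  rw [column, if_pos (even_two_mul b), Nat.mul_div_cancel_left b two_pos]
  simp [Finsupp.finsetSum_apply, Finsupp.single_apply]

variable {k}

theorem two_mul_mul_add_one_mod (hk : 0 < k) (j : ℕ) : (2 * (k * j) + 1) % (2 * k) = 1 := by
  rw [← mul_assoc, Nat.mul_add_mod, Nat.mod_eq_of_lt (by omega)]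

theorem two_mul_mul_add_one_div (hk : 0 < k) (j : ℕ) : (2 * (k * j) + 1) / (2 * k) = j := by
  rw [← mul_assoc, Nat.mul_add_div (by omega), Nat.div_eq_of_lt (by omega), add_zero]

theorem two_mul_mul_add_one_inj (hk : 0 < k) {i j : ℕ} :
    2 * (k * i) + 1 = 2 * (k * j) + 1 ↔ i = j := by
  simp [hk.ne']

theorem column_two_mul_mul_add_one (hk : 0 < k) (j i : ℕ) :
    column k (2 * (k * j) + 1) i = (if i < j then 2 * k else 0) + if i = j then 1 else 0 := by
  rw [column, if_neg (by simp), two_mul_mul_add_one_div hk, two_mul_mul_add_one_mod hk]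
  simp [Finsupp.single_apply, eq_comm]

theorem eq_two_mul_or_eq_two_mul_mul_add_one {c : ℕ} (hc : Odd c → c % (2 * k) = 1) :
    (∃ b, c = 2 * b) ∨ ∃ j, c = 2 * (k * j) + 1 := by
  refine c.even_or_odd.imp (fun h ↦ h.two_dvd) fun h ↦ ⟨c / (2 * k), ?_⟩
  rw [← mul_assoc, ← hc h, Nat.div_add_mod]

theorem rows_mod_two (hk : 0 < k) {m : Multiset ℕ} (hm : ∀ c ∈ m, Odd c → c % (2 * k) = 1)
    (i : ℕ) : rows k m i % 2 = m.count (2 * (k * i) + 1) % 2 := by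
  induction m using Multiset.induction_on with
  | empty => simp [rows]
  | cons c m ih =>
    obtain ⟨hc, hm⟩ := Multiset.forall_mem_cons.1 hm
    rw [rows_cons, Finsupp.add_apply, Multiset.count_cons, Nat.add_mod, ih hm]
    obtain ⟨b, rfl⟩ | ⟨j, rfl⟩ := eq_two_mul_or_eq_two_mul_mul_add_one hc
    · rw [column_two_mul]
      split_ifs <;> omega
    · rw [column_two_mul_mul_add_one hk]
      simp only [two_mul_mul_add_one_inj hk]
      split_ifs <;> omega

/-- Every subtraction is moved to the other side of the equation: row `i` exceeds row `i + 1` by `2`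
for each part `2 * (i + 1)`, by `2 * k - 1` for each part `2 * k * (i + 1) + 1`, and by `1` for each
part `2 * k * i + 1`. -/
theorem rows_add_count (hk : 0 < k) {m : Multiset ℕ} (hm : ∀ c ∈ m, Odd c → c % (2 * k) = 1)
    (i : ℕ) :
    rows k m i + m.count (2 * (k * (i + 1)) + 1) =
      rows k m (i + 1) + m.count (2 * (k * i) + 1) + 2 * m.count (2 * (i + 1)) +
        2 * k * m.count (2 * (k * (i + 1)) + 1) := by
  induction m using Multiset.induction_on with
  | empty => simp [rows]
  | cons c m ih =>
    obtain ⟨hc, hm⟩ := Multiset.forall_mem_cons.1 hm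
    have := ih hm
    simp only [rows_cons, Finsupp.add_apply, Multiset.count_cons]
    obtain ⟨b, rfl⟩ | ⟨j, rfl⟩ := eq_two_mul_or_eq_two_mul_mul_add_one hc
    · simp only [column_two_mul]
      grind
    · simp only [column_two_mul_mul_add_one hk, two_mul_mul_add_one_inj hk]
      grind

end Columns

section RowsBijection

theorem finsupp_ext_of_succ {α : Type*} [Zero α] {f g : ℕ →₀ α}
    (h : ∀ i, f (i + 1) = g (i + 1) → f i = g i) : f = g := by
  obtain ⟨N, hN⟩ := (f.support ∪ g.support).exists_nat_subset_range
  have heq (i : ℕ) (hi : N ≤ i) : f i = g i := by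
    have hi' : i ∉ f.support ∪ g.support := fun h ↦ (mem_range.1 (hN h)).not_ge hi
    simp only [mem_union, Finsupp.mem_support_iff, not_or, not_not] at hi'
    rw [hi'.1, hi'.2]
  refine Finsupp.ext fun i ↦ ?_
  rcases le_total N i with hi | hi
  · exact heq i hi
  · exact Nat.decreasingInduction (fun j _ ↦ h j) (heq N le_rfl) hi

variable {k : ℕ}

/-- The number of parts `2 * (i + 1)` in the partition with rows `f`. The subtractions do not
truncate when `OddGap k (f i) (f (i + 1))`. -/
def evenCount (k : ℕ) (f : ℕ → ℕ) (i : ℕ) : ℕ := f i / 2 - f (i + 1) / 2 - k * (f (i + 1) % 2)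

/-- The number of parts `c` in the partition with rows `f`. -/
def partCount (k : ℕ) (f : ℕ → ℕ) (c : ℕ) : ℕ :=
  if c % (2 * k) = 1 then f (c / (2 * k)) % 2
  else if Even c ∧ c ≠ 0 then evenCount k f (c / 2 - 1) else 0

theorem partCount_two_mul_succ (f : ℕ → ℕ) (i : ℕ) :
    partCount k f (2 * (i + 1)) = evenCount k f i := by
  have heven := even_two_mul (i + 1)
  rw [partCount, if_neg fun h ↦ Nat.not_odd_iff_even.2 heven (odd_of_mod_two_mul_eq_one h),
    if_pos ⟨heven, by simp⟩, Nat.mul_div_cancel_left _ two_pos, Nat.add_sub_cancel]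

theorem mod_two_mul_eq_one_of_partCount_ne_zero {f : ℕ → ℕ} {c : ℕ} (h : partCount k f c ≠ 0)
    (hc : Odd c) : c % (2 * k) = 1 := by
  rw [partCount] at h
  grind

theorem OddGap.eq_add_evenCount {f : ℕ → ℕ} {i : ℕ} (h : OddGap k (f i) (f (i + 1))) :
    f i + f (i + 1) % 2 =
      f (i + 1) + f i % 2 + 2 * evenCount k f i + 2 * k * (f (i + 1) % 2) := by
  rw [OddGap, Nat.odd_iff] at h
  rw [evenCount]
  rcases Nat.mod_two_eq_zero_or_one (f (i + 1)) with h' | h' <;> rw [h'] at h ⊢ <;> omega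

variable (hk : 0 < k)
include hk

theorem partCount_two_mul_mul_add_one (f : ℕ → ℕ) (j : ℕ) :
    partCount k f (2 * (k * j) + 1) = f j % 2 := by
  rw [partCount, if_pos (two_mul_mul_add_one_mod hk j), two_mul_mul_add_one_div hk]

theorem finite_support_partCount (f : ℕ →₀ ℕ) : (partCount k f).support.Finite := by
  refine (f.support.image (2 * (k * ·) + 1) ∪ f.support.image (2 * (· + 1))).finite_toSet.subset
    fun c hc ↦ ?_
  simp only [coe_union, coe_image, Set.mem_union, Set.mem_image, mem_coe, Finsupp.mem_support_iff]
  rw [mem_support] at hc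
  refine (eq_two_mul_or_eq_two_mul_mul_add_one
    (mod_two_mul_eq_one_of_partCount_ne_zero hc)).symm.imp ?_ ?_
  · rintro ⟨j, rfl⟩
    rw [partCount_two_mul_mul_add_one hk] at hc
    exact ⟨j, fun h ↦ hc (by simp [h]), rfl⟩
  · rintro ⟨_ | i, rfl⟩
    · simp [partCount] at hc
    · rw [partCount_two_mul_succ, evenCount] at hc
      exact ⟨i, fun h ↦ hc (by simp [h]), rfl⟩

section HasDistinctOddResidues

variable {m : Multiset ℕ} (hm : HasDistinctOddResidues k m)
include hm

theorem count_two_mul_mul_add_one (i : ℕ) : m.count (2 * (k * i) + 1) = rows k m i % 2 := by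
  have hle : m.count (2 * (k * i) + 1) ≤ 1 := by
    by_cases hmem : 2 * (k * i) + 1 ∈ m
    · exact (hm _ hmem (odd_two_mul_add_one _)).2
    · simp [hmem]
  rw [rows_mod_two hk (fun c hc hodd ↦ (hm c hc hodd).1), Nat.mod_eq_of_lt (by omega)]

theorem rows_eq_add_count (i : ℕ) :
    rows k m i + rows k m (i + 1) % 2 =
      rows k m (i + 1) + rows k m i % 2 + 2 * m.count (2 * (i + 1)) +
        2 * k * (rows k m (i + 1) % 2) := by
  simpa only [count_two_mul_mul_add_one hk hm] using
    rows_add_count hk (fun c hc hodd ↦ (hm c hc hodd).1) i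

theorem oddGap_rows (i : ℕ) : OddGap k (rows k m i) (rows k m (i + 1)) := by
  have hrow := rows_eq_add_count hk hm i
  rw [OddGap, Nat.odd_iff]
  rcases Nat.mod_two_eq_zero_or_one (rows k m (i + 1)) with h | h <;> rw [h] at hrow ⊢ <;> omega

theorem count_eq_partCount (h0 : 0 ∉ m) (c : ℕ) : m.count c = partCount k (rows k m) c := by
  by_cases hc : Odd c → c % (2 * k) = 1
  · obtain ⟨_ | i, rfl⟩ | ⟨j, rfl⟩ := eq_two_mul_or_eq_two_mul_mul_add_one hc
    · simpa [partCount] using h0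
    · have hrow := rows_eq_add_count hk hm i
      have hgap := (oddGap_rows hk hm i).eq_add_evenCount
      rw [partCount_two_mul_succ]
      omega
    · rw [count_two_mul_mul_add_one hk hm, partCount_two_mul_mul_add_one hk]
  · have hcm : c ∉ m := fun h ↦ hc fun hodd ↦ (hm c h hodd).1
    rw [Multiset.count_eq_zero_of_notMem hcm, eq_comm]
    contrapose! hc
    exact mod_two_mul_eq_one_of_partCount_ne_zero hc

end HasDistinctOddResidues

theorem exists_rows_eq {f : ℕ →₀ ℕ} (hf : ∀ i, OddGap k (f i) (f (i + 1))) :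
    ∃ m, (0 ∉ m ∧ HasDistinctOddResidues k m) ∧ rows k m = f := by
  obtain ⟨m, hcount⟩ := exists_multiset_count_eq (finite_support_partCount hk f)
  have hm : HasDistinctOddResidues k m := fun c hc hodd ↦ by
    rw [← Multiset.count_ne_zero, hcount] at hc
    have hmod := mod_two_mul_eq_one_of_partCount_ne_zero hc hodd
    refine ⟨hmod, ?_⟩
    rw [hcount, partCount, if_pos hmod]
    omega
  refine ⟨m, ⟨?_, hm⟩, finsupp_ext_of_succ fun i hi ↦ ?_⟩
  · rw [← Multiset.count_eq_zero, hcount]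
    simp [partCount]
  · have hgap := (hf i).eq_add_evenCount
    have hrow := rows_add_count hk (fun c hc hodd ↦ (hm c hc hodd).1) i
    simp only [hcount, partCount_two_mul_mul_add_one hk, partCount_two_mul_succ, hi] at hrow
    omega

theorem bijOn_rows :
    Set.BijOn (rows k) {m | 0 ∉ m ∧ HasDistinctOddResidues k m}
      {f | ∀ i, OddGap k (f i) (f (i + 1))} := by
  refine ⟨fun m hm ↦ oddGap_rows hk hm.2, fun m hm m' hm' h ↦ Multiset.ext.2 fun c ↦ ?_,
    fun f hf ↦ exists_rows_eq hk hf⟩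
  rw [count_eq_partCount hk hm.2 hm.1, count_eq_partCount hk hm'.2 hm'.1, h]

end RowsBijection

theorem bijOn_nonzeroValues_rows {k : ℕ} (hk : 0 < k) :
    Set.BijOn (fun m ↦ nonzeroValues (rows k m)) {m | 0 ∉ m ∧ HasDistinctOddResidues k m}
      {m | 0 ∉ m ∧ HasOddGaps k m} := by
  simp only [hasOddGaps_iff_pairwise]
  exact (bijOn_nonzeroValues oddGap_zero).comp (bijOn_rows hk)

end DualAndrews

open DualAndrews in
theorem dual_andrews_identity_general (k : ℕ) (hk : 0 < k) (n : ℕ) :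
    Nat.card {p : Nat.Partition n //
      ∀ c ∈ p.parts, (Even c ∧ c % (4 * k) ≠ 2) ∨
        (Odd c ∧ (c % (4 * k) = 1 ∨ c % (4 * k) = 2 * k + 1))} =
    Nat.card {p : Nat.Partition n //
      ∀ b ∈ p.parts, Odd b → ∀ c : ℕ, b ≤ c → c + 2 ≤ b + 2 * k →
        Multiset.count c p.parts ≤ if c = b then 1 else 0} :=
  calc
    _ = Nat.card {p : n.Partition // HasDistinctOddResidues k p.parts} :=
      (card_partition_eq_of_bijOn (bijOn_splitParts_hasResidues hk)
        (fun m _ ↦ sum_splitParts _ _ m) n).symm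
    _ = Nat.card {p : n.Partition // HasOddGaps k p.parts} :=
      card_partition_eq_of_bijOn (bijOn_nonzeroValues_rows hk) (fun m _ ↦ degree_rows k m) n

/-- Dual of Andrews's family of identities.
For `k ≥ 2`, partitions of `n` whose parts are even and `≢ 2 (mod 4k)`,
or odd and `≡ 1` or `2k+1 (mod 4k)`, are equinumerous with partitions of `n`
in which an odd part `b = 2j+1` forbids any other part in
`{2j+1, 2j+2, …, 2j+2k−1}`. -/
theorem dual_andrews_identity (k : ℕ) (hk : 2 ≤ k) (n : ℕ) :
    Nat.card {p : Nat.Partition n //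
      ∀ c ∈ p.parts, (Even c ∧ c % (4 * k) ≠ 2) ∨
        (Odd c ∧ (c % (4 * k) = 1 ∨ c % (4 * k) = 2 * k + 1))} =
    Nat.card {p : Nat.Partition n //
      ∀ b ∈ p.parts, Odd b → ∀ c : ℕ, b ≤ c → c + 2 ≤ b + 2 * k →
        Multiset.count c p.parts ≤ if c = b then 1 else 0} :=
  dual_andrews_identity_general k (by omega) n
end

section
/- For integers k ≥ 2 and 0 ≤ i ≤ k−1, and every non-negative integer n: the number of partitions of n in which each part is either even but not congruent to 4i+2 modulo 4k, or odd and congruent to 2i+1 or 2k+2i+1 modulo 4k, equals the number of partitions of n in which, whenever an odd part 2j+1 appears, no other even part equals any of 2j−2i+2, 2j−2i+4, ..., 2j+2k−2i−2, no other odd part equals any of 2j+1, 2j+3, ..., 2j+2k−1, and every odd part is at least 2i+1. -/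
/-!
Let `x j = 2i+1+2kj`. The parts on the left are the even numbers other than the doubles `2 * x j`,
together with the numbers `x j`. Since `1 / (1 - q ^ x) = (1 + q ^ x) / (1 - q ^ (2x))`, replacing
each `2 * x j` by two parts `x j` identifies these partitions with those into arbitrary even parts
and pairwise distinct parts `x j`.

Counting the latter by the bound `N` on the indices of the parts `2 * (j + 1)` and `x j` gives the
recursion `f (N+1) n = f N n + f N (n - x N) + f (N+1) (n - 2(N+1))`. Partitions satisfying the
difference conditions, padded with zeros to exactly `N` parts, obey the same recursion. If a part is
`0`, delete it. Otherwise, if a part is `2i+1`, all other parts are at least `2k`; delete it and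
subtract `2k` from each of the others. Otherwise subtract `2` from every part.
-/

namespace AndrewsInterpolatingFamily

theorem natCard_partition_eq_ncard (n : ℕ) (Q : Multiset ℕ → Prop) :
    Nat.card {p : n.Partition // Q p.parts} =
      {M : Multiset ℕ | (∀ c ∈ M, 0 < c) ∧ M.sum = n ∧ Q M}.ncard :=
  Nat.card_congr
    { toFun := fun p => ⟨p.1.parts, fun _ => p.1.parts_pos, p.1.parts_sum, p.2⟩
      invFun := fun M => ⟨⟨M.1, M.2.1 _, M.2.2.1⟩, M.2.2.2⟩
      left_inv := fun _ => rfl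
      right_inv := fun _ => rfl }

/-! ### Splitting doubled parts -/

section Doubling

variable {S O : Set ℕ} {M : Multiset ℕ}

open Classical in
/-- Replace every part `2 * a` with `a ∈ O` by two parts `a`. -/
noncomputable def splitDoubles (O : Set ℕ) (M : Multiset ℕ) : Multiset ℕ :=
  M.bind fun c => if c ∈ (2 * ·) '' O then {c / 2, c / 2} else {c}

theorem sum_splitDoubles (O : Set ℕ) (M : Multiset ℕ) : (splitDoubles O M).sum = M.sum := by
  rw [splitDoubles, Multiset.sum_bind]
  conv_rhs => rw [← Multiset.map_id M]
  refine congrArg _ (Multiset.map_congr rfl fun c _ => ?_)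
  split_ifs with hc
  · obtain ⟨a, -, rfl⟩ := hc
    rw [Nat.mul_div_cancel_left a two_pos, Multiset.sum_pair]
    exact (two_mul a).symm
  · rw [Multiset.sum_singleton, id]

theorem splitDoubles_add (O : Set ℕ) (M N : Multiset ℕ) :
    splitDoubles O (M + N) = splitDoubles O M + splitDoubles O N :=
  Multiset.add_bind _ _ _

theorem splitDoubles_eq_self (hM : ∀ c ∈ M, c ∉ (2 * ·) '' O) : splitDoubles O M = M := by
  rw [splitDoubles, Multiset.bind_congr fun c hc => if_neg (hM c hc), Multiset.bind_singleton,
    Multiset.map_id']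

theorem splitDoubles_map_two_mul (hM : ∀ a ∈ M, a ∈ O) :
    splitDoubles O (M.map (2 * ·)) = 2 • M := by
  induction M using Multiset.induction_on with
  | empty => rfl
  | cons a M ih =>
    rw [Multiset.forall_mem_cons] at hM
    rw [splitDoubles, Multiset.map_cons, Multiset.cons_bind, ← splitDoubles, ih hM.2,
      if_pos ⟨a, hM.1, rfl⟩, Nat.mul_div_cancel_left a two_pos, Multiset.nsmul_cons, two_nsmul]
    rfl

open Classical in
theorem count_splitDoubles (O : Set ℕ) (M : Multiset ℕ) (b : ℕ) :
    (splitDoubles O M).count b =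
      (if b ∈ (2 * ·) '' O then 0 else M.count b) + if b ∈ O then 2 * M.count (2 * b) else 0 := by
  induction M using Multiset.induction_on with
  | empty => simp [splitDoubles]
  | cons c M ih =>
    rw [splitDoubles, Multiset.cons_bind, ← splitDoubles, Multiset.count_add, ih]
    by_cases hc : c ∈ (2 * ·) '' O
    · obtain ⟨a, ha, rfl⟩ := hc
      have hdouble : 2 * b = 2 * a ↔ b = a := by omega
      rw [if_pos ⟨a, ha, rfl⟩, Nat.mul_div_cancel_left a two_pos]
      simp only [Multiset.insert_eq_cons, Multiset.count_cons, Multiset.count_singleton, hdouble]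
      grind
    · rw [if_neg hc]
      simp only [Multiset.count_cons, Multiset.count_singleton]
      grind

theorem mem_splitDoubles_iff {b : ℕ} :
    b ∈ splitDoubles O M ↔ b ∈ M ∧ b ∉ (2 * ·) '' O ∨ b ∈ O ∧ 2 * b ∈ M := by
  simp only [← Multiset.count_pos, count_splitDoubles]
  grind

theorem exists_nodup_add_two_nsmul {α : Type*} (M : Multiset α) :
    ∃ D U : Multiset α, D.Nodup ∧ M = D + 2 • U := by
  classical
  induction M using Multiset.induction_on with
  | empty => exact ⟨0, 0, Multiset.nodup_zero, rfl⟩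
  | cons a M ih =>
    obtain ⟨D, U, hD, rfl⟩ := ih
    by_cases ha : a ∈ D
    · refine ⟨D.erase a, a ::ₘ U, hD.erase a, ?_⟩
      calc a ::ₘ (D + 2 • U) = a ::ₘ (a ::ₘ D.erase a + 2 • U) := by rw [Multiset.cons_erase ha]
        _ = D.erase a + 2 • (a ::ₘ U) := by
          simp only [← Multiset.singleton_add, two_nsmul]
          abel
    · exact ⟨a ::ₘ D, U, Multiset.nodup_cons.mpr ⟨ha, hD⟩, (Multiset.cons_add a D _).symm⟩

theorem injOn_splitDoubles (hd : Disjoint O ((2 * ·) '' O)) :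
    Set.InjOn (splitDoubles O) {M | ∀ a ∈ O, M.count a ≤ 1} := by
  classical
  intro M hM N hN h
  have hcount (a : ℕ) (ha : a ∈ O) : M.count a = N.count a ∧ M.count (2 * a) = N.count (2 * a) := by
    have := congrArg (Multiset.count a) h
    rw [count_splitDoubles, count_splitDoubles, if_neg (hd.notMem_of_mem_left ha), if_pos ha,
      if_neg (hd.notMem_of_mem_left ha), if_pos ha] at this
    have := hM a ha
    have := hN a ha
    omega
  ext b
  by_cases hb : b ∈ O
  · exact (hcount b hb).1
  by_cases hb₂ : b ∈ (2 * ·) '' O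
  · obtain ⟨a, ha, rfl⟩ := hb₂
    exact (hcount a ha).2
  · simpa only [count_splitDoubles, hb, hb₂, if_false, add_zero] using
      congrArg (Multiset.count b) h

theorem exists_splitDoubles_eq (hd : Disjoint O ((2 * ·) '' O))
    (hM : ∀ c ∈ M, c ∉ (2 * ·) '' O) :
    ∃ N, splitDoubles O N = M ∧ ∀ a ∈ O, N.count a ≤ 1 := by
  classical
  obtain ⟨D, U, hD, hDU⟩ := exists_nodup_add_two_nsmul (M.filter (· ∈ O))
  have hmem {a : ℕ} (ha : a ∈ D + 2 • U) : a ∈ O := (Multiset.mem_filter.mp (hDU ▸ ha)).2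
  have hU : ∀ a ∈ U, a ∈ O := fun a ha => hmem (by simp [ha])
  have hDO : ∀ a ∈ D, a ∈ O := fun a ha => hmem (by simp [ha])
  refine ⟨M.filter (· ∉ O) + D + U.map (2 * ·), ?_, fun a ha => ?_⟩
  · rw [splitDoubles_add, splitDoubles_add, splitDoubles_map_two_mul hU,
      splitDoubles_eq_self fun c hc => hM c (Multiset.mem_of_mem_filter hc),
      splitDoubles_eq_self fun c hc => hd.notMem_of_mem_left (hDO c hc), add_assoc, ← hDU,
      add_comm, Multiset.filter_add_not]
  · have hfilter : (M.filter (· ∉ O)).count a = 0 := by simp [ha]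
    have hmap : (U.map (2 * ·)).count a = 0 :=
      Multiset.count_eq_zero.mpr fun h => by
        obtain ⟨b, hb, rfl⟩ := Multiset.mem_map.mp h
        exact hd.notMem_of_mem_left ha ⟨b, hU b hb, rfl⟩
    rw [Multiset.count_add, Multiset.count_add, hfilter, hmap, zero_add, add_zero]
    exact Multiset.nodup_iff_count_le_one.mp hD a

theorem card_partition_avoid_doubles_eq_card_not_repeated (hO : O ⊆ S) (h₂O : (2 * ·) '' O ⊆ S)
    (hd : Disjoint O ((2 * ·) '' O)) (n : ℕ) :
    Nat.card {p : n.Partition // ∀ c ∈ p.parts, c ∈ S \ (2 * ·) '' O} =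
      Nat.card {p : n.Partition //
        (∀ c ∈ p.parts, c ∈ S) ∧ ∀ a ∈ O, p.parts.count a ≤ 1} := by
  rw [natCard_partition_eq_ncard n fun M => ∀ c ∈ M, c ∈ S \ (2 * ·) '' O,
    natCard_partition_eq_ncard n fun M => (∀ c ∈ M, c ∈ S) ∧ ∀ a ∈ O, M.count a ≤ 1]
  have hmaps (M : Multiset ℕ) :
      (∀ c ∈ splitDoubles O M, 0 < c ∧ c ∈ S \ (2 * ·) '' O) ↔ ∀ c ∈ M, 0 < c ∧ c ∈ S := by
    simp only [mem_splitDoubles_iff]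
    have := fun a ha => hd.notMem_of_mem_left (a := a) ha
    grind
  refine (Set.BijOn.ncard_eq (f := splitDoubles O) ⟨?_, ?_, ?_⟩).symm
  · rintro M ⟨hpos, hsum, hS, -⟩
    have := (hmaps M).mpr fun c hc => ⟨hpos c hc, hS c hc⟩
    exact ⟨fun c hc => (this c hc).1, (sum_splitDoubles O M).trans hsum, fun c hc => (this c hc).2⟩
  · exact (injOn_splitDoubles hd).mono fun M hM => hM.2.2.2
  · rintro M ⟨hpos, hsum, hM⟩
    obtain ⟨N, rfl, hN⟩ := exists_splitDoubles_eq hd fun c hc => (hM c hc).2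
    have := (hmaps N).mp fun c hc => ⟨hpos c hc, hM c hc⟩
    exact ⟨N, ⟨fun c hc => (this c hc).1, (sum_splitDoubles O N).symm.trans hsum,
      fun c hc => (this c hc).2, hN⟩, rfl⟩

end Doubling

/-! ### Multisets with bounded elements -/

theorem encard_union_image_cons {α : Type*} {a : α} {F G : Set (Multiset α)}
    (hF : ∀ M ∈ F, a ∉ M) : (F ∪ (a ::ₘ ·) '' G).encard = F.encard + G.encard := by
  have hdisj : Disjoint F ((a ::ₘ ·) '' G) := by
    rw [Set.disjoint_left]
    rintro _ hM ⟨M, -, rfl⟩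
    exact hF _ hM (Multiset.mem_cons_self a M)
  rw [Set.encard_union_eq hdisj,
    Function.Injective.encard_image fun _ _ => (Multiset.cons_inj_right a).mp]

/-- Multisets with sum `n - d` whose elements lie in `A` or, without repetition, in `D`. The
condition on the sum is written additively because subtraction is truncated. -/
def multisetsFrom (A D : Set ℕ) (n d : ℕ) : Set (Multiset ℕ) :=
  {M | (∀ c ∈ M, c ∈ A ∪ D) ∧ (∀ c ∈ D, M.count c ≤ 1) ∧ M.sum + d = n}

theorem encard_multisetsFrom_insert_left {A D : Set ℕ} {a : ℕ} (ha : a ∉ A ∪ D) (n d : ℕ) :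
    (multisetsFrom (insert a A) D n d).encard =
      (multisetsFrom A D n d).encard + (multisetsFrom (insert a A) D n (d + a)).encard := by
  have hsplit : multisetsFrom (insert a A) D n d =
      multisetsFrom A D n d ∪ (a ::ₘ ·) '' multisetsFrom (insert a A) D n (d + a) := by
    ext M
    constructor
    · rintro ⟨hmem, hcount, hsum⟩
      by_cases haM : a ∈ M
      · obtain ⟨M, rfl⟩ := Multiset.exists_cons_of_mem haM
        rw [Multiset.sum_cons] at hsum
        exact .inr ⟨M, ⟨fun c hc => hmem c (Multiset.mem_cons_of_mem hc), fun c hc =>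
          (Multiset.count_le_count_cons c a M).trans (hcount c hc), by omega⟩, rfl⟩
      · exact .inl ⟨by grind, hcount, hsum⟩
    · rintro (⟨hmem, hcount, hsum⟩ | ⟨M, ⟨hmem, hcount, hsum⟩, rfl⟩)
      · exact ⟨by grind, hcount, hsum⟩
      · refine ⟨by grind, fun c hc => ?_, by rw [Multiset.sum_cons]; omega⟩
        rw [Multiset.count_cons_of_ne (by grind)]
        exact hcount c hc
  rw [hsplit, encard_union_image_cons fun M hM haM => ha (hM.1 a haM)]

theorem encard_multisetsFrom_insert_right {A D : Set ℕ} {a : ℕ} (ha : a ∉ A ∪ D) (n d : ℕ) :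
    (multisetsFrom A (insert a D) n d).encard =
      (multisetsFrom A D n d).encard + (multisetsFrom A D n (d + a)).encard := by
  have hsplit : multisetsFrom A (insert a D) n d =
      multisetsFrom A D n d ∪ (a ::ₘ ·) '' multisetsFrom A D n (d + a) := by
    ext M
    constructor
    · rintro ⟨hmem, hcount, hsum⟩
      by_cases haM : a ∈ M
      · obtain ⟨M, rfl⟩ := Multiset.exists_cons_of_mem haM
        have haM' : a ∉ M := by
          have := hcount a (Set.mem_insert a D)
          rw [Multiset.count_cons_self] at this
          exact Multiset.count_eq_zero.mp (by omega)
        rw [Multiset.sum_cons] at hsum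
        have hmem' : ∀ c ∈ M, c ∈ A ∪ D := fun c hc => by
          have := hmem c (Multiset.mem_cons_of_mem hc)
          have : c ≠ a := fun h => haM' (h ▸ hc)
          grind
        exact .inr ⟨M, ⟨hmem', fun c hc => (Multiset.count_le_count_cons c a M).trans
          (hcount c (Set.mem_insert_of_mem a hc)), by omega⟩, rfl⟩
      · exact .inl ⟨by grind, fun c hc => hcount c (Set.mem_insert_of_mem a hc), hsum⟩
    · rintro (⟨hmem, hcount, hsum⟩ | ⟨M, ⟨hmem, hcount, hsum⟩, rfl⟩)
      · have haM : M.count a = 0 := Multiset.count_eq_zero.mpr fun haM => ha (hmem a haM)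
        exact ⟨by grind, by grind, hsum⟩
      · have haM : M.count a = 0 := Multiset.count_eq_zero.mpr fun haM => ha (hmem a haM)
        exact ⟨by grind, by grind [Multiset.count_cons], by rw [Multiset.sum_cons]; omega⟩
  rw [hsplit, encard_union_image_cons fun M hM haM => ha (hM.1 a haM)]

/-- Multisets with sum `n - d` and elements among `2, 4, …, 2 * N` or, without repetition, among
`x 0, …, x (N - 1)`. -/
def multisetsBelow (x : ℕ → ℕ) (n N d : ℕ) : Set (Multiset ℕ) :=
  multisetsFrom ((fun m => 2 * (m + 1)) '' Set.Iio N) (x '' Set.Iio N) n d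

theorem encard_multisetsBelow_succ {x : ℕ → ℕ} (hodd : ∀ j, Odd (x j))
    (hinj : Function.Injective x) (n N d : ℕ) :
    (multisetsBelow x n (N + 1) d).encard =
      (multisetsBelow x n N d).encard + (multisetsBelow x n N (d + x N)).encard +
        (multisetsBelow x n (N + 1) (d + 2 * (N + 1))).encard := by
  have hIio : Set.Iio (N + 1) = insert N (Set.Iio N) := Order.Iio_succ_eq_insert N
  have hne (m j : ℕ) : 2 * (m + 1) ≠ x j := fun h => by grind [hodd j]
  have hx : x N ∉ (fun m => 2 * (m + 1)) '' Set.Iio N ∪ x '' Set.Iio N := by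
    simp [hinj.eq_iff, hne]
  have heven :
      2 * (N + 1) ∉ (fun m => 2 * (m + 1)) '' Set.Iio N ∪ insert (x N) (x '' Set.Iio N) := by
    simp [hne, (hne _ _).symm]
  simp only [multisetsBelow, hIio, Set.image_insert_eq]
  rw [encard_multisetsFrom_insert_left heven, encard_multisetsFrom_insert_right hx]

theorem card_partition_eq_ncard_multisetsBelow {x : ℕ → ℕ} (hodd : ∀ j, Odd (x j))
    (hx : StrictMono x) {n N : ℕ} (hN : n < N) :
    Nat.card {p : n.Partition //
        (∀ c ∈ p.parts, c ∈ {c | Even c} ∪ Set.range x) ∧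
          ∀ a ∈ Set.range x, p.parts.count a ≤ 1} =
      (multisetsBelow x n N 0).ncard := by
  rw [natCard_partition_eq_ncard n fun M =>
    (∀ c ∈ M, c ∈ {c | Even c} ∪ Set.range x) ∧ ∀ a ∈ Set.range x, M.count a ≤ 1]
  congr 1
  ext M
  have hle {j : ℕ} : j ≤ x j := hx.le_apply
  constructor
  · rintro ⟨hpos, hsum, hmem, hcount⟩
    refine ⟨fun c hc => ?_, fun c hc => hcount c (Set.image_subset_range _ _ hc), hsum⟩
    have hcn : c ≤ n := hsum ▸ Multiset.le_sum_of_mem hc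
    obtain ⟨m, rfl⟩ | ⟨j, rfl⟩ := hmem c hc
    · exact .inl ⟨m - 1, by grind, by grind⟩
    · exact .inr ⟨j, hle.trans_lt (by omega), rfl⟩
  · rintro ⟨hmem, hcount, hsum⟩
    have hpos : ∀ c ∈ M, 0 < c := fun c hc => by
      obtain ⟨m, -, rfl⟩ | ⟨j, -, rfl⟩ := hmem c hc
      exacts [Nat.mul_pos two_pos m.succ_pos, (hodd j).pos]
    refine ⟨hpos, hsum, fun c hc => ?_, ?_⟩
    · obtain ⟨m, -, rfl⟩ | hc := hmem c hc
      exacts [.inl (even_two_mul _), .inr (Set.image_subset_range _ _ hc)]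
    · rintro _ ⟨j, rfl⟩
      by_cases hj : x j ∈ M
      · have hjn : x j ≤ n := hsum ▸ Multiset.le_sum_of_mem hj
        exact hcount _ ⟨j, hle.trans_lt (by omega), rfl⟩
      · rw [Multiset.count_eq_zero.mpr hj]
        exact zero_le_one

/-! ### The progression of odd parts -/

/-- The positive integers congruent to `2 * i + 1` modulo `2 * k` in increasing order, for
`i < k`. -/
def progression (k i j : ℕ) : ℕ := 2 * i + 1 + 2 * k * j

theorem odd_progression (k i j : ℕ) : Odd (progression k i j) :=
  ⟨i + k * j, by rw [progression]; ring⟩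

theorem odd_of_mem_range_progression {k i c : ℕ} (hc : c ∈ Set.range (progression k i)) :
    Odd c := by
  obtain ⟨j, rfl⟩ := hc
  exact odd_progression k i j

theorem even_of_mem_image_two_mul {O : Set ℕ} {c : ℕ} (hc : c ∈ (2 * ·) '' O) : Even c := by
  obtain ⟨a, -, rfl⟩ := hc
  exact even_two_mul a

theorem strictMono_progression {k : ℕ} (hk : 0 < k) (i : ℕ) : StrictMono (progression k i) :=
  fun _ _ h => Nat.add_lt_add_left (Nat.mul_lt_mul_of_pos_left h (Nat.mul_pos two_pos hk)) _

theorem mem_range_progression_iff {k i c : ℕ} (hi : i < k) :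
    c ∈ Set.range (progression k i) ↔ c % (2 * k) = 2 * i + 1 := by
  constructor
  · rintro ⟨j, rfl⟩
    rw [progression, Nat.add_mul_mod_self_left, Nat.mod_eq_of_lt (by omega)]
  · intro h
    exact ⟨c / (2 * k), by rw [progression, ← h, Nat.mod_add_div]⟩

theorem mem_range_progression_iff_mod_four_mul {k i c : ℕ} (hi : i < k) :
    c ∈ Set.range (progression k i) ↔
      c % (4 * k) = 2 * i + 1 ∨ c % (4 * k) = 2 * k + 2 * i + 1 := by
  have hmod : c % (4 * k) % (2 * k) = c % (2 * k) := Nat.mod_mod_of_dvd c ⟨2, by ring⟩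
  have hlt : c % (4 * k) < 4 * k := Nat.mod_lt c (by omega)
  rw [mem_range_progression_iff hi, ← hmod]
  obtain h | h := lt_or_ge (c % (4 * k)) (2 * k)
  · rw [Nat.mod_eq_of_lt h]
    omega
  · rw [Nat.mod_eq_sub_mod h, Nat.mod_eq_of_lt (by omega)]
    omega

theorem mem_double_progression_iff {k i c : ℕ} (hi : i < k) :
    c ∈ (2 * ·) '' Set.range (progression k i) ↔ c % (4 * k) = 4 * i + 2 := by
  have hmod (a : ℕ) : 2 * a % (4 * k) = 2 * (a % (2 * k)) := by
    rw [show 4 * k = 2 * (2 * k) by ring, Nat.mul_mod_mul_left]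
  constructor
  · rintro ⟨a, ha, rfl⟩
    rw [mem_range_progression_iff hi] at ha
    rw [hmod]
    omega
  · intro h
    obtain ⟨a, rfl⟩ : 2 ∣ c :=
      (Nat.dvd_mod_iff (n := 4 * k) ⟨2 * k, by ring⟩).mp ⟨2 * i + 1, by omega⟩
    rw [hmod] at h
    exact ⟨a, (mem_range_progression_iff hi).mpr (by omega), rfl⟩

theorem mem_even_union_progression_diff_double_iff {k i c : ℕ} (hi : i < k) :
    c ∈ ({c | Even c} ∪ Set.range (progression k i)) \
        (2 * ·) '' Set.range (progression k i) ↔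
      (Even c ∧ c % (4 * k) ≠ 4 * i + 2) ∨
        (Odd c ∧ (c % (4 * k) = 2 * i + 1 ∨ c % (4 * k) = 2 * k + 2 * i + 1)) := by
  have hodd : c ∈ Set.range (progression k i) → Odd c := odd_of_mem_range_progression
  have heven : c ∈ (2 * ·) '' Set.range (progression k i) → Even c := even_of_mem_image_two_mul
  rw [ne_eq, ← mem_double_progression_iff hi, ← mem_range_progression_iff_mod_four_mul hi,
    Set.mem_sdiff, Set.mem_union, Set.mem_ofPred_eq]
  rw [← Nat.not_even_iff_odd] at hodd ⊢
  tauto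

/-! ### Admissible multisets -/

section Pairwise

variable {α : Type*} {r : α → α → Prop} [Std.Symm r]

theorem pairwise_cons {a : α} {M : Multiset α} :
    (a ::ₘ M).Pairwise r ↔ (∀ b ∈ M, r a b) ∧ M.Pairwise r :=
  Quotient.inductionOn M fun l => by
    simpa only [Multiset.quot_mk_to_coe, Multiset.cons_coe, Multiset.pairwise_coe_iff_pairwise,
      Multiset.mem_coe] using List.pairwise_cons

theorem pairwise_map_iff {f : α → α} (hf : ∀ a b, r (f a) (f b) ↔ r a b) {M : Multiset α} :
    (M.map f).Pairwise r ↔ M.Pairwise r := by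
  induction M using Multiset.induction_on with
  | empty => rfl
  | cons a M ih =>
    simp only [Multiset.map_cons, pairwise_cons, ih, Multiset.forall_mem_map_iff, hf]

theorem pairwise_iff_forall_ne_and_dup [DecidableEq α] {M : Multiset α} :
    M.Pairwise r ↔ (∀ a ∈ M, ∀ b ∈ M, a ≠ b → r a b) ∧ ∀ a, 1 < M.count a → r a a := by
  refine ⟨fun h => ⟨h.forall, fun a ha => ?_⟩, fun h => ?_⟩
  · have ha' : a ::ₘ {a} ≤ M := Multiset.le_count_iff_replicate_le.mp ha
    obtain ⟨M', rfl⟩ := Multiset.le_iff_exists_add.mp ha'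
    rw [Multiset.cons_add, pairwise_cons] at h
    exact h.1 a (by simp)
  · induction M using Multiset.induction_on with
    | empty => exact Multiset.pairwise_zero r
    | cons a M ih =>
      obtain ⟨hne, hdup⟩ := h
      refine pairwise_cons.mpr ⟨fun b hb => ?_, ih ⟨fun b hb c hc => ?_, fun b hb => ?_⟩⟩
      · rcases eq_or_ne a b with rfl | hab
        · exact hdup a (by simpa using Multiset.count_pos.mpr hb)
        · exact hne a (Multiset.mem_cons_self a M) b (Multiset.mem_cons_of_mem hb) hab
      · exact hne b (Multiset.mem_cons_of_mem hb) c (Multiset.mem_cons_of_mem hc)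
      · exact hdup b (hb.trans_le (Multiset.count_le_count_cons b a M))

end Pairwise

/-- Two parts `b`, `c` do not violate the difference conditions: if one of them is odd, the other
lies outside the window of values that it forbids. The bounds are written additively because
subtraction is truncated. -/
def Compatible (k i b c : ℕ) : Prop :=
  (Odd b → Even c → c + 2 * i < b ∨ b + 2 * k ≤ c + 2 * i + 1) ∧
  (Odd c → Even b → b + 2 * i < c ∨ c + 2 * k ≤ b + 2 * i + 1) ∧
  (Odd b → Odd c → b + 2 * k ≤ c ∨ c + 2 * k ≤ b)

instance (k i : ℕ) : Std.Symm (Compatible k i) :=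
  ⟨fun _ _ ⟨h₁, h₂, h₃⟩ => ⟨h₂, h₁, fun hc hb => (h₃ hb hc).symm⟩⟩

theorem compatible_add_two_mul_iff (k i s b c : ℕ) :
    Compatible k i (b + 2 * s) (c + 2 * s) ↔ Compatible k i b c := by
  have hodd (a : ℕ) : Odd (a + 2 * s) ↔ Odd a := by grind
  have heven (a : ℕ) : Even (a + 2 * s) ↔ Even a := by grind
  simp only [Compatible, hodd, heven]
  grind

/-- The difference conditions on the right-hand side of the identity. Parts `0` are allowed, so
that the number of parts can be kept fixed. -/
def IsAdmissible (k i : ℕ) (M : Multiset ℕ) : Prop :=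
  M.Pairwise (Compatible k i) ∧ ∀ c ∈ M, Odd c → 2 * i + 1 ≤ c

theorem isAdmissible_zero_cons_iff {k i : ℕ} {M : Multiset ℕ} :
    IsAdmissible k i (0 ::ₘ M) ↔ IsAdmissible k i M := by
  have hzero (h : ∀ c ∈ M, Odd c → 2 * i + 1 ≤ c) : ∀ c ∈ M, Compatible k i 0 c :=
    fun c hc => by have := h c hc; grind [Compatible]
  simp only [IsAdmissible, pairwise_cons, Multiset.forall_mem_cons]
  grind

theorem compatible_self_iff {k i : ℕ} (hk : 0 < k) (b : ℕ) : Compatible k i b b ↔ Even b := by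
  grind [Compatible]

theorem isAdmissible_iff {k i : ℕ} (hk : 0 < k) {M : Multiset ℕ} :
    IsAdmissible k i M ↔
      (∀ b ∈ M, Odd b →
        (∀ c : ℕ, Even c → b + 1 ≤ c + 2 * i → c + 2 * i + 3 ≤ b + 2 * k →
          Multiset.count c M = 0) ∧
        (∀ c : ℕ, Odd c → b ≤ c → c + 2 ≤ b + 2 * k →
          Multiset.count c M ≤ if c = b then 1 else 0)) ∧
      (∀ c ∈ M, Odd c → 2 * i + 1 ≤ c) := by
  refine and_congr_left fun _ => ?_
  simp only [pairwise_iff_forall_ne_and_dup, compatible_self_iff hk]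
  constructor
  · rintro ⟨hne, hdup⟩ b hb hbo
    refine ⟨fun c hce hlo hhi => Multiset.count_eq_zero.mpr fun hc => ?_, fun c hco hlo hhi => ?_⟩
    · grind [hne b hb c hc, Compatible]
    · split_ifs with hcb
      · grind
      · refine (Multiset.count_eq_zero.mpr fun hc => ?_).le
        grind [hne b hb c hc (Ne.symm hcb), Compatible]
  · intro h
    have hodd_even {b c : ℕ} (hb : b ∈ M) (hc : c ∈ M) (hbo : Odd b) (hce : Even c) :
        c + 2 * i < b ∨ b + 2 * k ≤ c + 2 * i + 1 := by
      have hforbid := (h b hb hbo).1 c hce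
      have hcount := Multiset.count_pos.mpr hc
      rw [Nat.odd_iff] at hbo
      rw [Nat.even_iff] at hce
      omega
    have hodd_odd {b c : ℕ} (hb : b ∈ M) (hc : c ∈ M) (hbc : b < c) (hbo : Odd b) (hco : Odd c) :
        b + 2 * k ≤ c := by
      have hforbid := (h b hb hbo).2 c hco hbc.le
      have hcount := Multiset.count_pos.mpr hc
      rw [if_neg hbc.ne'] at hforbid
      rw [Nat.odd_iff] at hbo hco
      omega
    refine ⟨fun b hb c hc hbc => ⟨hodd_even hb hc, hodd_even hc hb, fun hbo hco => ?_⟩,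
      fun b hb => ?_⟩
    · exact hbc.lt_or_gt.imp (hodd_odd hb hc · hbo hco) (hodd_odd hc hb · hco hbo)
    · by_contra hbe
      have hbo := Nat.not_even_iff_odd.mp hbe
      have hcount := (h b (Multiset.count_pos.mp (by omega)) hbo).2 b hbo le_rfl (by omega)
      rw [if_pos rfl] at hcount
      omega

/-- Admissible multisets with `N` elements and sum `n - d`. -/
def admissibleMultisets (k i n N d : ℕ) : Set (Multiset ℕ) :=
  {M | M.card = N ∧ IsAdmissible k i M ∧ M.sum + d = n}

theorem sum_map_add_const (M : Multiset ℕ) (s : ℕ) :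
    (M.map (· + s)).sum = M.sum + M.card * s := by
  rw [Multiset.sum_map_add, Multiset.map_id', Multiset.map_const', Multiset.sum_replicate,
    smul_eq_mul]

theorem exists_map_add_const_eq {M : Multiset ℕ} {s : ℕ} (hM : ∀ c ∈ M, s ≤ c) :
    ∃ M' : Multiset ℕ, M'.map (· + s) = M := by
  refine ⟨M.map (· - s), ?_⟩
  rw [Multiset.map_map]
  exact (Multiset.map_congr rfl fun c hc => Nat.sub_add_cancel (hM c hc)).trans (Multiset.map_id' M)

theorem isAdmissible_cons_map_add_iff {k i : ℕ} {M : Multiset ℕ} :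
    IsAdmissible k i ((2 * i + 1) ::ₘ M.map (· + 2 * k)) ↔ IsAdmissible k i M := by
  have hodd (c : ℕ) : Odd (c + 2 * k) ↔ Odd c := by grind
  have heven (c : ℕ) : Even (c + 2 * k) ↔ Even c := by grind
  simp only [IsAdmissible, pairwise_cons, Multiset.forall_mem_cons, Multiset.forall_mem_map_iff,
    pairwise_map_iff fun b c => compatible_add_two_mul_iff k i k b c, Compatible, hodd, heven]
  grind

theorem isAdmissible_map_add_two_iff {k i : ℕ} {M : Multiset ℕ}
    (hM : 2 * i + 1 ∉ M.map (· + 2)) :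
    IsAdmissible k i (M.map (· + 2)) ↔ IsAdmissible k i M := by
  have hodd (c : ℕ) : Odd (c + 2) ↔ Odd c := by grind
  simp only [IsAdmissible, Multiset.forall_mem_map_iff, hodd,
    pairwise_map_iff fun b c => compatible_add_two_mul_iff k i 1 b c]
  refine and_congr_right fun _ => forall₂_congr fun c hc => imp_congr_right fun hco => ?_
  have hne : c + 2 ≠ 2 * i + 1 := fun h => hM (h ▸ Multiset.mem_map_of_mem _ hc)
  rw [Nat.odd_iff] at hco
  omega

theorem admissibleMultisets_zero_mem (k i n N d : ℕ) :
    {M ∈ admissibleMultisets k i n (N + 1) d | 0 ∈ M} =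
      (0 ::ₘ ·) '' admissibleMultisets k i n N d := by
  ext M
  constructor
  · rintro ⟨⟨hcard, hM, hsum⟩, h₀⟩
    obtain ⟨M, rfl⟩ := Multiset.exists_cons_of_mem h₀
    exact ⟨M, ⟨by simpa using hcard, isAdmissible_zero_cons_iff.mp hM, by simpa using hsum⟩, rfl⟩
  · rintro ⟨M, ⟨hcard, hM, hsum⟩, rfl⟩
    exact ⟨⟨by simpa using hcard, isAdmissible_zero_cons_iff.mpr hM, by simpa using hsum⟩,
      Multiset.mem_cons_self 0 M⟩

theorem admissibleMultisets_odd_mem {k : ℕ} (hk : 0 < k) (i n N d : ℕ) :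
    {M ∈ admissibleMultisets k i n (N + 1) d | 0 ∉ M ∧ 2 * i + 1 ∈ M} =
      (fun M => (2 * i + 1) ::ₘ M.map (· + 2 * k)) ''
        admissibleMultisets k i n N (d + progression k i N) := by
  have hsum_iff {M : Multiset ℕ} (hcard : M.card = N) :
      ((2 * i + 1) ::ₘ M.map (· + 2 * k)).sum + d = n ↔
        M.sum + (d + progression k i N) = n := by
    rw [progression, Multiset.sum_cons, sum_map_add_const, hcard, Nat.mul_comm N]
    omega
  ext M
  constructor
  · rintro ⟨⟨hcard, hM, hsum⟩, h₀, h₁⟩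
    obtain ⟨M, rfl⟩ := Multiset.exists_cons_of_mem h₁
    have hge : ∀ c ∈ M, 2 * k ≤ c := fun c hc => by
      have hcompat := (pairwise_cons.mp hM.1).1 c hc
      have hodd := hM.2 c (Multiset.mem_cons_of_mem hc)
      grind [Compatible]
    obtain ⟨M, rfl⟩ := exists_map_add_const_eq hge
    have hcard : M.card = N := by simpa using hcard
    exact ⟨M, ⟨hcard, isAdmissible_cons_map_add_iff.mp hM, (hsum_iff hcard).mp hsum⟩, rfl⟩
  · rintro ⟨M, ⟨hcard, hM, hsum⟩, rfl⟩
    exact ⟨⟨by simpa using hcard, isAdmissible_cons_map_add_iff.mpr hM, (hsum_iff hcard).mpr hsum⟩,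
      by simp [hk.ne'], Multiset.mem_cons_self _ _⟩

theorem admissibleMultisets_notMem (k i n N d : ℕ) :
    {M ∈ admissibleMultisets k i n N d | 0 ∉ M ∧ 2 * i + 1 ∉ M} =
      Multiset.map (· + 2) '' admissibleMultisets k i n N (d + 2 * N) := by
  have hsum_iff {M : Multiset ℕ} (hcard : M.card = N) :
      (M.map (· + 2)).sum + d = n ↔ M.sum + (d + 2 * N) = n := by
    rw [sum_map_add_const, hcard]
    omega
  ext M
  constructor
  · rintro ⟨⟨hcard, hM, hsum⟩, h₀, h₁⟩
    have hge : ∀ c ∈ M, 2 ≤ c := fun c hc => by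
      have hodd := hM.2 c hc
      have hc₀ : c ≠ 0 := fun h => h₀ (h ▸ hc)
      have hc₁ : c ≠ 2 * i + 1 := fun h => h₁ (h ▸ hc)
      grind
    obtain ⟨M, rfl⟩ := exists_map_add_const_eq hge
    rw [Multiset.card_map] at hcard
    exact ⟨M, ⟨hcard, (isAdmissible_map_add_two_iff h₁).mp hM, (hsum_iff hcard).mp hsum⟩, rfl⟩
  · rintro ⟨M, ⟨hcard, hM, hsum⟩, rfl⟩
    have h₁ : 2 * i + 1 ∉ M.map (· + 2) := fun h => by
      obtain ⟨c, hc, hci⟩ := Multiset.mem_map.mp h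
      have hodd := hM.2 c hc
      grind
    exact ⟨⟨by rwa [Multiset.card_map], (isAdmissible_map_add_two_iff h₁).mpr hM,
      (hsum_iff hcard).mpr hsum⟩, by simp, h₁⟩

theorem encard_admissibleMultisets_succ {k : ℕ} (hk : 0 < k) (i n N d : ℕ) :
    (admissibleMultisets k i n (N + 1) d).encard =
      (admissibleMultisets k i n N d).encard +
        (admissibleMultisets k i n N (d + progression k i N)).encard +
        (admissibleMultisets k i n (N + 1) (d + 2 * (N + 1))).encard := by
  have hsplit : admissibleMultisets k i n (N + 1) d =
      {M ∈ admissibleMultisets k i n (N + 1) d | 0 ∈ M} ∪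
      {M ∈ admissibleMultisets k i n (N + 1) d | 0 ∉ M ∧ 2 * i + 1 ∈ M} ∪
      {M ∈ admissibleMultisets k i n (N + 1) d | 0 ∉ M ∧ 2 * i + 1 ∉ M} := by
    ext M
    simp only [Set.mem_union, Set.mem_ofPred_eq]
    tauto
  have hcons (a : ℕ) : Function.Injective (a ::ₘ · : Multiset ℕ → Multiset ℕ) :=
    fun _ _ => (Multiset.cons_inj_right a).mp
  have hmap (s : ℕ) : Function.Injective (Multiset.map (· + s)) :=
    Multiset.map_injective (add_left_injective s)
  rw [hsplit, Set.encard_union_eq (Set.disjoint_left.mpr (by grind)),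
    Set.encard_union_eq (Set.disjoint_left.mpr (by grind)),
    admissibleMultisets_zero_mem, admissibleMultisets_odd_mem hk, admissibleMultisets_notMem,
    (hcons 0).encard_image, (hmap 2).encard_image,
    Function.Injective.encard_image fun _ _ h => hmap (2 * k) (hcons (2 * i + 1) h)]

theorem card_partition_eq_ncard_zero_padded {Q : Multiset ℕ → Prop}
    (hQ : ∀ M, Q (0 ::ₘ M) ↔ Q M) {n N : ℕ} (hN : n ≤ N) :
    Nat.card {p : n.Partition // Q p.parts} =
      {M : Multiset ℕ | M.card = N ∧ Q M ∧ M.sum = n}.ncard := by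
  have hpad (M : Multiset ℕ) (m : ℕ) : Q (M + Multiset.replicate m 0) ↔ Q M := by
    induction m with
    | zero => rw [Multiset.replicate_zero, add_zero]
    | succ m ih => rw [Multiset.replicate_succ, Multiset.add_cons, hQ, ih]
  have hfilter (M : Multiset ℕ) : M.filter (· ≠ 0) + Multiset.replicate (M.count 0) 0 = M := by
    rw [← Multiset.filter_eq', add_comm, Multiset.filter_add_not]
  rw [natCard_partition_eq_ncard]
  refine (Set.BijOn.ncard_eq (f := Multiset.filter (· ≠ 0)) ⟨?_, ?_, ?_⟩).symm
  · rintro M ⟨-, hM, hsum⟩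
    rw [← hfilter M, hpad] at hM
    rw [← hfilter M, Multiset.sum_add, Multiset.sum_replicate, smul_zero, add_zero] at hsum
    exact ⟨fun c hc => Nat.pos_of_ne_zero (Multiset.mem_filter.mp hc).2, hsum, hM⟩
  · rintro M ⟨hcard, -, -⟩ M' ⟨hcard', -, -⟩ h
    rw [← hfilter M, h, Multiset.card_add, Multiset.card_replicate] at hcard
    rw [← hfilter M', Multiset.card_add, Multiset.card_replicate] at hcard'
    have hcount : M.count 0 = M'.count 0 := by omega
    rw [← hfilter M, h, hcount, hfilter]
  · rintro M ⟨hpos, hsum, hM⟩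
    have hcard : M.card ≤ N := by
      have := Multiset.card_nsmul_le_sum (s := M) (a := 1) hpos
      rw [smul_eq_mul, mul_one] at this
      omega
    refine ⟨M + Multiset.replicate (N - M.card) 0, ⟨?_, (hpad _ _).mpr hM, ?_⟩, ?_⟩
    · rw [Multiset.card_add, Multiset.card_replicate, Nat.add_sub_cancel' hcard]
    · rw [Multiset.sum_add, Multiset.sum_replicate, smul_zero, add_zero, hsum]
    · rw [Multiset.filter_add, Multiset.filter_eq_self.mpr fun c hc => (hpos c hc).ne',
        Multiset.filter_eq_nil.mpr fun c hc => not_not.mpr (Multiset.eq_of_mem_replicate hc),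
        add_zero]

/-! ### Comparison of the two recursions -/

theorem eq_of_recursion {β : Type*} [Add β] {x : ℕ → ℕ} {f g : ℕ → ℕ → β} {n : ℕ}
    (hf : ∀ N d, f (N + 1) d = f N d + f N (d + x N) + f (N + 1) (d + 2 * (N + 1)))
    (hg : ∀ N d, g (N + 1) d = g N d + g N (d + x N) + g (N + 1) (d + 2 * (N + 1)))
    (h₀ : ∀ d, f 0 d = g 0 d) (hlt : ∀ N d, n < d → f N d = g N d) (N d : ℕ) :
    f N d = g N d := by
  induction N generalizing d with
  | zero => exact h₀ d
  | succ N ihN =>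
    induction hm : n + 1 - d using Nat.strong_induction_on generalizing d with
    | _ m ih =>
      obtain hnd | hdn := lt_or_ge n d
      · exact hlt _ _ hnd
      · rw [hf, hg, ihN, ihN, ih _ (by omega) _ rfl]

theorem encard_multisetsBelow_eq_encard_admissibleMultisets {k : ℕ} (hk : 0 < k) (i n N d : ℕ) :
    (multisetsBelow (progression k i) n N d).encard =
      (admissibleMultisets k i n N d).encard := by
  refine eq_of_recursion (n := n) (x := progression k i)
    (f := fun N d => (multisetsBelow (progression k i) n N d).encard)
    (g := fun N d => (admissibleMultisets k i n N d).encard)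
    (encard_multisetsBelow_succ (odd_progression k i) (strictMono_progression hk i).injective n)
    (encard_admissibleMultisets_succ hk i n) (fun d => ?_) (fun N d hnd => ?_) N d
  · congr 1
    ext M
    constructor
    · rintro ⟨hmem, -, hsum⟩
      obtain rfl : M = 0 := Multiset.eq_zero_iff_forall_notMem.mpr fun c hc => by
        simpa using hmem c hc
      exact ⟨rfl, ⟨Multiset.pairwise_zero _, by simp⟩, hsum⟩
    · rintro ⟨hcard, -, hsum⟩
      obtain rfl := Multiset.card_eq_zero.mp hcard
      exact ⟨by simp, by simp, hsum⟩
  · have hT : multisetsBelow (progression k i) n N d = ∅ :=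
      Set.eq_empty_of_forall_notMem fun M hM => by have := hM.2.2; omega
    have hR : admissibleMultisets k i n N d = ∅ :=
      Set.eq_empty_of_forall_notMem fun M hM => by have := hM.2.2; omega
    rw [hT, hR]

end AndrewsInterpolatingFamily

open AndrewsInterpolatingFamily

/-- The family of corollaries interpolating between Andrews's identities (`i = k−1`)
and their dual (`i = 0`). For `k ≥ 2` and `0 ≤ i ≤ k−1`: partitions of `n` whose parts
are even and `≢ 4i+2 (mod 4k)`, or odd and `≡ 2i+1` or `2k+2i+1 (mod 4k)`, are
equinumerous with partitions of `n` in which an odd part `b = 2j+1` forbids any other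
even part in `{2j−2i+2, 2j−2i+4, …, 2j+2k−2i−2}`, forbids any other odd part in
`{2j+1, 2j+3, …, 2j+2k−1}`, and every odd part is at least `2i+1`. -/
theorem andrews_interpolating_family (k i : ℕ) (hk : 2 ≤ k) (hi : i ≤ k - 1) (n : ℕ) :
    Nat.card {p : Nat.Partition n //
      ∀ c ∈ p.parts, (Even c ∧ c % (4 * k) ≠ 4 * i + 2) ∨
        (Odd c ∧ (c % (4 * k) = 2 * i + 1 ∨ c % (4 * k) = 2 * k + 2 * i + 1))} =
    Nat.card {p : Nat.Partition n //
      (∀ b ∈ p.parts, Odd b →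
        (∀ c : ℕ, Even c → b + 1 ≤ c + 2 * i → c + 2 * i + 3 ≤ b + 2 * k →
          Multiset.count c p.parts = 0) ∧
        (∀ c : ℕ, Odd c → b ≤ c → c + 2 ≤ b + 2 * k →
          Multiset.count c p.parts ≤ if c = b then 1 else 0)) ∧
      (∀ c ∈ p.parts, Odd c → 2 * i + 1 ≤ c)} := by
  have hk₀ : 0 < k := by omega
  have hik : i < k := by omega
  set O : Set ℕ := Set.range (progression k i)
  have hdouble : (2 * ·) '' O ⊆ {c | Even c} ∪ O := fun c hc => .inl (even_of_mem_image_two_mul hc)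
  have hdisj : Disjoint O ((2 * ·) '' O) := Set.disjoint_left.mpr fun c hc hc₂ =>
    Nat.not_even_iff_odd.mpr (odd_of_mem_range_progression hc) (even_of_mem_image_two_mul hc₂)
  calc
    _ = Nat.card {p : n.Partition //
          ∀ c ∈ p.parts, c ∈ ({c | Even c} ∪ O) \ (2 * ·) '' O} := by
      simp only [O, mem_even_union_progression_diff_double_iff hik]
    _ = Nat.card {p : n.Partition //
          (∀ c ∈ p.parts, c ∈ {c | Even c} ∪ O) ∧ ∀ a ∈ O, p.parts.count a ≤ 1} :=
      card_partition_avoid_doubles_eq_card_not_repeated Set.subset_union_right hdouble hdisj n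
    _ = (multisetsBelow (progression k i) n (n + 1) 0).ncard :=
      card_partition_eq_ncard_multisetsBelow (odd_progression k i) (strictMono_progression hk₀ i)
        n.lt_succ_self
    _ = (admissibleMultisets k i n (n + 1) 0).ncard :=
      congrArg ENat.toNat (encard_multisetsBelow_eq_encard_admissibleMultisets hk₀ i n (n + 1) 0)
    _ = Nat.card {p : n.Partition // IsAdmissible k i p.parts} :=
      (card_partition_eq_ncard_zero_padded (fun _ => isAdmissible_zero_cons_iff) n.le_succ).symm
    _ = _ := by simp only [isAdmissible_iff hk₀]
end

section
/- For every n, the number of partitions of n with all parts congruent to ±1 modulo 6 equals the number of partitions of n in which adjacent parts differ by at least 3, and by at least 6 if both are divisible by 3. -/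
/-!
Both sides count the partitions of `n` into distinct parts prime to `3`.

For the parts `≡ ±1 (mod 6)`, that is, the parts prime to `3` that are not twice a number prime to
`3`, this is a variant of Euler's theorem: multiplying either generating function by that of the
partitions into doubles of numbers prime to `3` gives the generating function of all partitions
into parts prime to `3`.

For the partitions satisfying the difference condition we follow Andrews. Weight a part `a` by
`x * q ^ a`, or by `x ^ 2 * q ^ a` if `3 ∣ a`, and let `S m x` be the total weight of those with all
parts at most `m`. Splitting off the largest part gives second-order recurrences in `n` for
`S (3 * n - 1) x` and for `S (3 * n + 3) x`, which show that
`S (3 * n + 3) x = (1 + x * q) * (1 + x * q ^ 2) * S (3 * n - 1) (x * q ^ 3)`. Iterating this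
identity modulo powers of `q` gives the product `∏ (1 + x * q ^ i)` over the `i` prime to `3`.
-/

open Finset PowerSeries Filter
open scoped PowerSeries.WithPiTopology

section Subbarao

variable (R : Type*) [CommSemiring R] [TopologicalSpace R] [T2Space R]
  (p : ℕ → Prop) [DecidablePred p] {m : ℕ}

theorem hasProd_powerSeriesMk_card_restricted_inter_countRestricted (hm : 0 < m) :
    HasProd (fun i ↦ if p (i + 1) then ∑ j ∈ range m, X ^ ((i + 1) * j) else 1)
      (PowerSeries.mk fun n ↦
        (#(Nat.Partition.restricted n p ∩ Nat.Partition.countRestricted n m) : R)) := by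
  convert! Nat.Partition.hasProd_genFun (fun i c ↦ if p i ∧ c < m then (1 : R) else 0) using 1
  · ext1 i
    split_ifs with hi
    · rw [tsum_eq_sum (s := range (m - 1)) (fun j hj ↦ by
          rw [if_neg (by grind), zero_smul]),
        sum_range_eq_add_Ico _ hm, sum_Ico_eq_sum_range]
      refine congrArg₂ _ (by simp) (sum_congr rfl fun j hj ↦ ?_)
      rw [mem_range] at hj
      rw [if_pos ⟨hi, by omega⟩, one_smul, add_comm 1 j]
    · simp [hi]
  · simp_rw [Nat.Partition.genFun, Nat.Partition.restricted, Nat.Partition.countRestricted,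
      ← filter_and, card_filter, Finsupp.prod, prod_boole]
    simp [forall_and]

theorem hasProd_powerSeriesMk_card_restricted_dvd_and_div [IsTopologicalSemiring R] (hm : 0 < m) :
    HasProd (fun i ↦ if p (i + 1) then ∑' j : ℕ, X ^ (m * (i + 1) * j) else 1)
      (PowerSeries.mk fun n ↦ (#(Nat.Partition.restricted n fun c ↦ m ∣ c ∧ p (c / m)) : R)) := by
  have pred_add_one (i : ℕ) : m * (i + 1) - 1 + 1 = m * (i + 1) :=
    Nat.sub_add_cancel (Nat.mul_pos hm i.succ_pos)
  have injective : Function.Injective fun i ↦ m * (i + 1) - 1 := fun i j h ↦ by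
    have h' : m * (i + 1) = m * (j + 1) := by rw [← pred_add_one i, ← pred_add_one j]; simp_all
    simpa using Nat.eq_of_mul_eq_mul_left hm h'
  have eq_one_of_notMem_range : ∀ c, c ∉ Set.range (fun i ↦ m * (i + 1) - 1) →
      (if m ∣ c + 1 ∧ p ((c + 1) / m) then ∑' j : ℕ, (X : R⟦X⟧) ^ ((c + 1) * j) else 1) = 1 := by
    refine fun c hc ↦ if_neg fun ⟨⟨d, hd⟩, _⟩ ↦ hc ⟨d - 1, ?_⟩
    have d_pos : 0 < d := Nat.pos_of_ne_zero fun h ↦ by simp [h] at hd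
    simp [Nat.sub_add_cancel d_pos, ← hd]
  have h := (injective.hasProd_iff eq_one_of_notMem_range).2
    (Nat.Partition.hasProd_powerSeriesMk_card_restricted R fun c ↦ m ∣ c ∧ p (c / m))
  simpa [Function.comp_def, pred_add_one, hm] using h

end Subbarao

theorem powerSeriesMk_card_restricted_and_not_mul (R : Type*) [CommSemiring R]
    (p q : ℕ → Prop) [DecidablePred p] [DecidablePred q] (hqp : ∀ c, q c → p c) :
    (PowerSeries.mk fun n ↦ (#(Nat.Partition.restricted n fun c ↦ p c ∧ ¬q c) : R)) *
        PowerSeries.mk (fun n ↦ (#(Nat.Partition.restricted n q) : R)) =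
      PowerSeries.mk fun n ↦ (#(Nat.Partition.restricted n p) : R) := by
  let _ : TopologicalSpace R := ⊥
  have _ : DiscreteTopology R := ⟨rfl⟩
  refine HasProd.unique ?_ (Nat.Partition.hasProd_powerSeriesMk_card_restricted R p)
  convert! (Nat.Partition.hasProd_powerSeriesMk_card_restricted R fun c ↦ p c ∧ ¬q c).mul
    (Nat.Partition.hasProd_powerSeriesMk_card_restricted R q) using 2 with i
  by_cases hq : q (i + 1)
  · simp [hq, hqp]
  · simp [hq]

theorem tsum_X_pow_mul_eq_geom_sum_mul_tsum {R : Type*} [CommRing R] [TopologicalSpace R]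
    [T2Space R] [IsTopologicalRing R] {i m : ℕ} (hi : 0 < i) (hm : 0 < m) :
    ∑' j : ℕ, (X : R⟦X⟧) ^ (i * j) = (∑ j ∈ range m, X ^ (i * j)) * ∑' j : ℕ, X ^ (m * i * j) := by
  have constantCoeff_X_pow {k : ℕ} (hk : 0 < k) : constantCoeff ((X : R⟦X⟧) ^ k) = 0 := by
    simp [hk.ne']
  have geom := WithPiTopology.tsum_pow_mul_one_sub_of_constantCoeff_eq_zero
    (constantCoeff_X_pow hi)
  have geom_mul := WithPiTopology.one_sub_mul_tsum_pow_of_constantCoeff_eq_zero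
    (constantCoeff_X_pow (Nat.mul_pos hm hi))
  have geom_sum := geom_sum_mul_neg ((X : R⟦X⟧) ^ i) m
  simp_rw [pow_mul, ← pow_mul _ m, mul_comm m i] at *
  refine left_inv_eq_right_inv geom ?_
  linear_combination geom_mul + geom_sum * ∑' j : ℕ, ((X : R⟦X⟧) ^ (i * m)) ^ j

theorem powerSeriesMk_card_restricted_inter_countRestricted_mul (R : Type*) [CommRing R]
    (p : ℕ → Prop) [DecidablePred p] {m : ℕ} (hm : 0 < m) :
    (PowerSeries.mk fun n ↦
        (#(Nat.Partition.restricted n p ∩ Nat.Partition.countRestricted n m) : R)) *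
        PowerSeries.mk (fun n ↦ (#(Nat.Partition.restricted n fun c ↦ m ∣ c ∧ p (c / m)) : R)) =
      PowerSeries.mk fun n ↦ (#(Nat.Partition.restricted n p) : R) := by
  let _ : TopologicalSpace R := ⊥
  have _ : DiscreteTopology R := ⟨rfl⟩
  refine HasProd.unique ?_ (Nat.Partition.hasProd_powerSeriesMk_card_restricted R p)
  convert! (hasProd_powerSeriesMk_card_restricted_inter_countRestricted R p hm).mul
    (hasProd_powerSeriesMk_card_restricted_dvd_and_div R p hm) using 2 with i
  split_ifs
  · exact tsum_X_pow_mul_eq_geom_sum_mul_tsum i.succ_pos hm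
  · exact (one_mul 1).symm

/-- Subbarao's generalization of the theorems of Euler and Glaisher. -/
theorem card_restricted_and_not_eq_card_restricted_inter_countRestricted
    (n : ℕ) {m : ℕ} (hm : 0 < m) (p : ℕ → Prop) [DecidablePred p] (hp : ∀ c, p c → p (m * c)) :
    #(Nat.Partition.restricted n fun c ↦ p c ∧ ¬(m ∣ c ∧ p (c / m))) =
      #(Nat.Partition.restricted n p ∩ Nat.Partition.countRestricted n m) := by
  have of_dvd_and_div (c : ℕ) (hc : m ∣ c ∧ p (c / m)) : p c :=
    Nat.mul_div_cancel' hc.1 ▸ hp _ hc.2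
  have ne_zero :
      PowerSeries.mk (fun n ↦ (#(Nat.Partition.restricted n fun c ↦ m ∣ c ∧ p (c / m)) : ℤ)) ≠ 0 :=
    fun h ↦ by simpa [Nat.Partition.restricted] using congrArg (coeff 0) h
  have series_eq := mul_right_cancel₀ ne_zero <|
    (powerSeriesMk_card_restricted_and_not_mul ℤ p _ of_dvd_and_div).trans
      (powerSeriesMk_card_restricted_inter_countRestricted_mul ℤ p hm).symm
  simpa using PowerSeries.ext_iff.1 series_eq n

section GapPartitions

/-- The partitions with parts at most `m`, as decreasing lists, in which every part `a` exceeds the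
next one by more than `d a`. -/
def gapPartitions (d : ℕ → ℕ) : ℕ → Finset (List ℕ)
  | 0 => {[]}
  | m + 1 => gapPartitions d m ∪ (gapPartitions d (m - d (m + 1))).image (List.cons (m + 1))

theorem mem_gapPartitions {d : ℕ → ℕ} {m : ℕ} {l : List ℕ} :
    l ∈ gapPartitions d m ↔
      (∀ a ∈ l, 0 < a) ∧ l.IsChain (fun a b ↦ b + d a < a) ∧ ∀ a ∈ l.head?, a ≤ m := by
  induction m using Nat.strong_induction_on generalizing l with
  | _ m ih =>
  cases m with
  | zero =>
    cases l with
    | nil => simp [gapPartitions]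
    | cons a t => simp +contextual [gapPartitions, Nat.pos_iff_ne_zero]
  | succ m =>
    rw [gapPartitions, mem_union, ih m (by omega)]
    cases l with
    | nil => simp
    | cons a t =>
      have head_lt_iff (ht : ∀ b ∈ t, 0 < b) : (∀ b ∈ t.head?, b + d (m + 1) < m + 1) ↔
          ∀ b ∈ t.head?, b ≤ m - d (m + 1) := forall₂_congr fun b hb ↦ by
        have b_pos := ht b (List.mem_of_mem_head? hb)
        omega
      simp only [mem_image, ih (m - d (m + 1)) (by omega), List.cons.injEq, List.isChain_cons,
        List.forall_mem_cons, List.head?_cons, Option.mem_some_iff, forall_eq']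
      grind

theorem mem_filter_gapPartitions_sum_eq {d : ℕ → ℕ} {n : ℕ} {l : List ℕ} :
    l ∈ ({l ∈ gapPartitions d n | l.sum = n} : Finset (List ℕ)) ↔
      (∀ a ∈ l, 0 < a) ∧ l.sum = n ∧ l.IsChain (fun a b ↦ b + d a < a) := by
  have head_le_sum : ∀ a ∈ l.head?, a ≤ l.sum := fun a ha ↦
    List.le_sum_of_mem (List.mem_of_mem_head? ha)
  rw [mem_filter, mem_gapPartitions]
  grind

variable {R : Type*} [Semiring R]

/-- The generating function of `gapPartitions d m` in which a part `a` has weight `w a`. -/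
def gapSum (d : ℕ → ℕ) (w : ℕ → R) (m : ℕ) : R :=
  ∑ l ∈ gapPartitions d m, (l.map w).prod

theorem gapSum_zero (d : ℕ → ℕ) (w : ℕ → R) : gapSum d w 0 = 1 := by
  simp [gapSum, gapPartitions]

theorem gapSum_succ (d : ℕ → ℕ) (w : ℕ → R) (m : ℕ) :
    gapSum d w (m + 1) = gapSum d w m + w (m + 1) * gapSum d w (m - d (m + 1)) := by
  have disjoint : Disjoint (gapPartitions d m)
      ((gapPartitions d (m - d (m + 1))).image (List.cons (m + 1))) := by
    refine Finset.disjoint_left.2 fun l hl hl' ↦ ?_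
    obtain ⟨t, -, rfl⟩ := mem_image.1 hl'
    simpa using (mem_gapPartitions.1 hl).2.2
  rw [gapSum, gapPartitions, sum_union disjoint, sum_image List.cons_injective.injOn]
  simp [gapSum, mul_sum]

theorem coeff_gapSum_X_pow (d : ℕ → ℕ) (m n : ℕ) :
    coeff n (gapSum d (fun a ↦ (X : R⟦X⟧) ^ a) m) = #{l ∈ gapPartitions d m | l.sum = n} := by
  have map_pow_prod (l : List ℕ) : (l.map fun a ↦ (X : R⟦X⟧) ^ a).prod = X ^ l.sum := by
    induction l with
    | nil => simp
    | cons a t ih => simp [ih, pow_add]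
  simp [gapSum, map_pow_prod, coeff_X_pow, sum_boole, eq_comm]

theorem gapSum_smodEq {R : Type*} [CommRing R] {I : Ideal R} {d : ℕ → ℕ} {w : ℕ → R}
    {m m' : ℕ} (hm : m ≤ m') (hw : ∀ a, m < a → w a ∈ I) :
    gapSum d w m' ≡ gapSum d w m [SMOD I] := by
  induction m', hm using Nat.le_induction with
  | base => rfl
  | succ k hk ih =>
    rw [gapSum_succ]
    simpa using ih.add (SModEq.zero.2 (I.mul_mem_right _ (hw (k + 1) (by omega))))

end GapPartitions

section Schur

/-- The gap function for which `gapPartitions` are the partitions of Schur's theorem: a part below a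
multiple of `3` has to be at least `4` less, since being exactly `3` less would make both parts
multiples of `3`. -/
def schurGap (a : ℕ) : ℕ := if 3 ∣ a then 3 else 2

theorem add_schurGap_lt_iff {a b : ℕ} :
    b + schurGap a < a ↔ b + 3 ≤ a ∧ (3 ∣ a ∧ 3 ∣ b → b + 6 ≤ a) := by
  unfold schurGap
  split_ifs <;> omega

variable {R : Type*} [CommRing R]

/-- Andrews' weight of a part, in which a multiple of `3` counts as two parts. -/
def schurWeight (x q : R) (a : ℕ) : R := (if 3 ∣ a then x ^ 2 else x) * q ^ a

/-- The generating function of Schur's partitions with parts at most `m`, weighted by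
`schurWeight`. -/
def schurSum (x q : R) (m : ℕ) : R := gapSum schurGap (schurWeight x q) m

variable (x q : R) (n : ℕ)

theorem schurSum_zero : schurSum x q 0 = 1 := gapSum_zero _ _

theorem schurSum_three_mul_add_one :
    schurSum x q (3 * n + 1) =
      schurSum x q (3 * n) + x * q ^ (3 * n + 1) * schurSum x q (3 * n - 2) := by
  have h : ¬3 ∣ 3 * n + 1 := by omega
  simp [schurSum, gapSum_succ _ _ (3 * n), schurWeight, schurGap, h]

theorem schurSum_three_mul_add_two :
    schurSum x q (3 * n + 2) =
      schurSum x q (3 * n + 1) + x * q ^ (3 * n + 2) * schurSum x q (3 * n - 1) := by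
  have h : ¬3 ∣ 3 * n + 2 := by omega
  simp [schurSum, gapSum_succ _ _ (3 * n + 1), schurWeight, schurGap, h]

theorem schurSum_three_mul_add_three :
    schurSum x q (3 * n + 3) =
      schurSum x q (3 * n + 2) + x ^ 2 * q ^ (3 * n + 3) * schurSum x q (3 * n - 1) := by
  have h : 3 ∣ 3 * n + 3 := by omega
  simp [schurSum, gapSum_succ _ _ (3 * n + 2), schurWeight, schurGap, h]

/-- For `n = 0` the truncated `3 * n - 1` is `0`, in agreement with the recurrence, which extends
`schurSum` to `-1` by the value `1`. -/
theorem schurSum_three_mul_add_five :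
    schurSum x q (3 * n + 5) =
      schurSum x q (3 * n + 2) * (1 + x * q ^ (3 * n + 4) + x * q ^ (3 * n + 5)) +
        x ^ 2 * q ^ (3 * n + 3) * (1 - q ^ (3 * n + 3)) * schurSum x q (3 * n - 1) := by
  have h₂ := schurSum_three_mul_add_two x q n
  have h₃ := schurSum_three_mul_add_three x q n
  have h₄ : schurSum x q (3 * n + 4) =
    schurSum x q (3 * n + 3) + x * q ^ (3 * n + 4) * schurSum x q (3 * n + 1) :=
      schurSum_three_mul_add_one x q (n + 1)
  have h₅ : schurSum x q (3 * n + 5) =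
    schurSum x q (3 * n + 4) + x * q ^ (3 * n + 5) * schurSum x q (3 * n + 2) :=
      schurSum_three_mul_add_two x q (n + 1)
  linear_combination h₅ + h₄ + h₃ - x * q ^ (3 * n + 4) * h₂

theorem schurSum_three_mul_add_nine :
    schurSum x q (3 * n + 9) =
      schurSum x q (3 * n + 6) * (1 + x * q ^ (3 * n + 7) + x * q ^ (3 * n + 8)) +
        x ^ 2 * q ^ (3 * n + 9) * (1 - q ^ (3 * n + 3)) * schurSum x q (3 * n + 3) := by
  have h₃ := schurSum_three_mul_add_three x q n
  have h₅ := schurSum_three_mul_add_five x q n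
  have h₆ : schurSum x q (3 * n + 6) =
    schurSum x q (3 * n + 5) + x ^ 2 * q ^ (3 * n + 6) * schurSum x q (3 * n + 2) :=
      schurSum_three_mul_add_three x q (n + 1)
  have h₈ : schurSum x q (3 * n + 8) =
    schurSum x q (3 * n + 5) * (1 + x * q ^ (3 * n + 7) + x * q ^ (3 * n + 8)) +
      x ^ 2 * q ^ (3 * n + 6) * (1 - q ^ (3 * n + 6)) * schurSum x q (3 * n + 2) :=
      schurSum_three_mul_add_five x q (n + 1)
  have h₉ : schurSum x q (3 * n + 9) =
    schurSum x q (3 * n + 8) + x ^ 2 * q ^ (3 * n + 9) * schurSum x q (3 * n + 5) :=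
      schurSum_three_mul_add_three x q (n + 2)
  rw [h₉, h₈, h₆, h₃, h₅]
  ring

theorem schurSum_two : schurSum x q 2 = 1 + x * q + x * q ^ 2 := calc
  schurSum x q 2 = schurSum x q 1 + x * q ^ 2 * schurSum x q 0 :=
    schurSum_three_mul_add_two x q 0
  _ = schurSum x q 0 + x * q ^ 1 * schurSum x q 0 + x * q ^ 2 * schurSum x q 0 :=
    congrArg (· + _) (schurSum_three_mul_add_one x q 0)
  _ = 1 + x * q + x * q ^ 2 := by simp only [schurSum_zero, pow_one, mul_one]

theorem schurSum_three_mul_add_three_eq_mul :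
    schurSum x q (3 * n + 3) =
      (1 + x * q) * (1 + x * q ^ 2) * schurSum (x * q ^ 3) q (3 * n - 1) := by
  induction n using Nat.twoStepInduction with
  | zero => calc
      schurSum x q 3 = schurSum x q 2 + x ^ 2 * q ^ 3 * schurSum x q 0 :=
        schurSum_three_mul_add_three x q 0
      _ = (1 + x * q) * (1 + x * q ^ 2) * schurSum (x * q ^ 3) q 0 := by
        simp only [schurSum_zero, schurSum_two]
        ring
  | one => calc
      schurSum x q 6 = schurSum x q 5 + x ^ 2 * q ^ 6 * schurSum x q 2 :=
        schurSum_three_mul_add_three x q 1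
      _ = schurSum x q 2 * (1 + x * q ^ 4 + x * q ^ 5) +
            x ^ 2 * q ^ 3 * (1 - q ^ 3) * schurSum x q 0 + x ^ 2 * q ^ 6 * schurSum x q 2 :=
        congrArg (· + _) (schurSum_three_mul_add_five x q 0)
      _ = (1 + x * q) * (1 + x * q ^ 2) * schurSum (x * q ^ 3) q 2 := by
        simp only [schurSum_zero, schurSum_two]
        ring
  | more n ih₀ ih₁ =>
    change schurSum x q (3 * n + 9) = _ * schurSum (x * q ^ 3) q (3 * n + 5)
    change schurSum x q (3 * n + 6) = _ * schurSum (x * q ^ 3) q (3 * n + 2) at ih₁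
    rw [schurSum_three_mul_add_nine, schurSum_three_mul_add_five, ih₀, ih₁]
    ring

theorem schurSum_smodEq_of_le {m m' : ℕ} (h : m ≤ m') :
    schurSum x q m' ≡ schurSum x q m [SMOD Ideal.span {q ^ (m + 1)}] :=
  gapSum_smodEq h fun _ ha ↦
    Ideal.mul_mem_left _ _ (Ideal.mem_span_singleton.2 (pow_dvd_pow q ha))

theorem schurSum_smodEq_one (m : ℕ) : schurSum x q m ≡ 1 [SMOD Ideal.span {x}] := by
  rw [← schurSum_zero x q]
  refine gapSum_smodEq m.zero_le fun a _ ↦ Ideal.mul_mem_right _ _ (Ideal.mem_span_singleton.2 ?_)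
  split_ifs
  exacts [dvd_pow_self x two_ne_zero, dvd_rfl]

theorem schurSum_smodEq_mul_schurSum (m : ℕ) :
    schurSum x q m ≡ (1 + x * q) * (1 + x * q ^ 2) * schurSum (x * q ^ 3) q m
      [SMOD Ideal.span {q ^ (m + 1)}] := calc
  schurSum x q m ≡ schurSum x q (3 * (m + 1) + 3) [SMOD Ideal.span {q ^ (m + 1)}] :=
    (schurSum_smodEq_of_le x q (by omega)).symm
  _ ≡ (1 + x * q) * (1 + x * q ^ 2) * schurSum (x * q ^ 3) q (3 * m + 2)
      [SMOD Ideal.span {q ^ (m + 1)}] := by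
    rw [schurSum_three_mul_add_three_eq_mul]; rfl
  _ ≡ _ [SMOD Ideal.span {q ^ (m + 1)}] :=
    SModEq.rfl.mul (schurSum_smodEq_of_le _ q (by omega))

theorem schurSum_smodEq_prod_mul_schurSum (m k : ℕ) :
    schurSum x q m ≡
      (∏ i ∈ range (3 * k), if ¬3 ∣ i + 1 then 1 + x * q ^ (i + 1) else 1) *
        schurSum (x * q ^ (3 * k)) q m [SMOD Ideal.span {q ^ (m + 1)}] := by
  induction k generalizing x with
  | zero => simp
  | succ k ih =>
    refine (schurSum_smodEq_mul_schurSum x q m).trans ((SModEq.rfl.mul (ih (x * q ^ 3))).trans ?_)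
    have prod_shift : (∏ i ∈ range (3 * k),
        if ¬3 ∣ 3 + i + 1 then 1 + x * q ^ (3 + i + 1) else 1) =
          ∏ i ∈ range (3 * k), if ¬3 ∣ i + 1 then 1 + x * q ^ 3 * q ^ (i + 1) else 1 := by
      simp only [add_assoc, Nat.dvd_add_self_left, pow_add, mul_assoc]
    rw [mul_add_one, add_comm (3 * k), prod_range_add, prod_shift, pow_add q 3, ← mul_assoc x,
      ← mul_assoc]
    simp [prod_range_succ]

theorem schurSum_smodEq_prod {m k : ℕ} (hk : m < 3 * k) :
    schurSum x q m ≡ ∏ i ∈ range (3 * k), (if ¬3 ∣ i + 1 then 1 + x * q ^ (i + 1) else 1)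
      [SMOD Ideal.span {q ^ (m + 1)}] := by
  have h : schurSum (x * q ^ (3 * k)) q m ≡ 1 [SMOD Ideal.span {q ^ (m + 1)}] :=
    (schurSum_smodEq_one _ q m).mono (Ideal.span_singleton_le_span_singleton.2
      ((pow_dvd_pow q hk).mul_left x))
  simpa using (schurSum_smodEq_prod_mul_schurSum x q m k).trans (SModEq.rfl.mul h)

theorem schurSum_one_left (m : ℕ) : schurSum 1 q m = gapSum schurGap (q ^ ·) m := by
  have schurWeight_one_left : schurWeight 1 q = (q ^ ·) := by
    ext
    simp [schurWeight]
  rw [schurSum, schurWeight_one_left]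

end Schur

theorem card_gapPartitions_schurGap_eq_card_restricted_inter_countRestricted (n : ℕ) :
    #{l ∈ gapPartitions schurGap n | l.sum = n} =
      #(Nat.Partition.restricted n (¬3 ∣ ·) ∩ Nat.Partition.countRestricted n 2) := by
  have coeff_prod_eq {k : ℕ} (hk : n < k) : coeff n (∏ i ∈ range (3 * k),
      if ¬3 ∣ i + 1 then 1 + (X : ℤ⟦X⟧) ^ (i + 1) else 1) =
        (#{l ∈ gapPartitions schurGap n | l.sum = n} : ℤ) := by
    have h := schurSum_smodEq_prod (1 : ℤ⟦X⟧) X (show n < 3 * k by omega)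
    rw [SModEq.comm, SModEq.sub_mem, Ideal.mem_span_singleton, X_pow_dvd_iff] at h
    rw [← coeff_gapSum_X_pow, ← schurSum_one_left, ← sub_eq_zero, ← map_sub]
    simpa only [one_mul] using h n n.lt_succ_self
  have hasProd : HasProd (fun i ↦ if ¬3 ∣ i + 1 then 1 + (X : ℤ⟦X⟧) ^ (i + 1) else 1)
      (PowerSeries.mk fun n ↦
        (#(Nat.Partition.restricted n (¬3 ∣ ·) ∩ Nat.Partition.countRestricted n 2) : ℤ)) := by
    have sum_range_two (k : ℕ) : ∑ j ∈ range 2, (X : ℤ⟦X⟧) ^ (k * j) = 1 + X ^ k := by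
      simp [sum_range_succ]
    simpa only [sum_range_two] using
      hasProd_powerSeriesMk_card_restricted_inter_countRestricted ℤ (¬3 ∣ ·) two_pos
  have tendsto_coeff := ((WithPiTopology.tendsto_iff_coeff_tendsto _ _ _ _).1
    hasProd.tendsto_prod_nat n).comp (tendsto_id.const_mul_atTop' three_pos)
  have coeff_eq := tendsto_nhds_unique tendsto_coeff
    (tendsto_atTop_of_eventually_const (i₀ := n + 1) fun k hk ↦ coeff_prod_eq hk)
  simpa using coeff_eq.symm

/-- Schur's 1926 partition theorem: partitions of `n` into parts `≡ ±1 (mod 6)`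
are equinumerous with partitions of `n` (written as weakly decreasing lists of
positive parts) in which adjacent parts differ by at least `3`, and by at least `6`
if both are divisible by `3`. -/
theorem schur_partition_theorem (n : ℕ) :
    Nat.card {p : Nat.Partition n // ∀ c ∈ p.parts, c % 6 = 1 ∨ c % 6 = 5} =
    Nat.card {l : List ℕ // (∀ x ∈ l, 0 < x) ∧ l.sum = n ∧
      l.Chain' (fun a b => b + 3 ≤ a ∧ ((3 ∣ a ∧ 3 ∣ b) → b + 6 ≤ a))} := by
  have mod_six_iff (c : ℕ) : c % 6 = 1 ∨ c % 6 = 5 ↔ ¬3 ∣ c ∧ ¬(2 ∣ c ∧ ¬3 ∣ c / 2) := by omega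
  calc
    _ = #(Nat.Partition.restricted n fun c ↦ ¬3 ∣ c ∧ ¬(2 ∣ c ∧ ¬3 ∣ c / 2)) :=
      Nat.subtype_card _ fun p ↦ by
        simp only [Nat.Partition.restricted, mem_filter_univ, mod_six_iff]
    _ = #(Nat.Partition.restricted n (¬3 ∣ ·) ∩ Nat.Partition.countRestricted n 2) :=
      card_restricted_and_not_eq_card_restricted_inter_countRestricted n two_pos _
        fun c ↦ by omega
    _ = #{l ∈ gapPartitions schurGap n | l.sum = n} :=
      (card_gapPartitions_schurGap_eq_card_restricted_inter_countRestricted n).symm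
    _ = _ := by
      refine (Nat.subtype_card _ fun l ↦ ?_).symm
      simp only [mem_filter_gapPartitions_sum_eq, add_schurGap_lt_iff, List.Chain']
end
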